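/- For p = 1,2: (a) H²_𝔪(Z_p)_{(μ,ν)} ≅ H⁰_𝔪(H_{p−1})_{(μ,ν)} for every bidegree (μ,ν) such that H²_𝔪(K_p)_{(μ,ν)} = 0; (b) H³_𝔪(Z_p)_{(μ,ν)} = 0 for every (μ,ν) such that H²_𝔪(K_{p−1})_{(μ,ν)} = H²_𝔪(K_p)_{(μ,ν)} = H³_𝔪(K_{p+1})_{(μ,ν)} = 0. -/

import Mathlib

open MvPolynomial

noncomputable section

/-- the coordinate ring `R = k[s₀,s₁,t₀,t₁]` of `ℙ¹ × ℙ¹` (variables `0,1 ↦ s`, `2,3 ↦ t`). -/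
abbrev RR (k : Type) [Field k] := MvPolynomial (Fin 4) k

/-- `R₁ = k[s₀,s₁]`. -/
abbrev R1 (k : Type) [Field k] := MvPolynomial (Fin 2) k

/-- the homogeneous coordinate ring `S = k[x₀,…,x₃]` of `ℙ³`. -/
abbrev SS (k : Type) [Field k] := MvPolynomial (Fin 4) k

variable (k : Type) [Field k] [IsAlgClosed k]

/-- weights of the four variables `s₀,s₁,t₀,t₁` for the `(s,t)`-bigrading of `R`. -/
def stw : Fin 4 → ℤ × ℤ := fun i => if (i : ℕ) ≤ 1 then (1, 0) else (0, 1)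

/-- the bihomogeneous piece of `R` of bidegree `(μ,ν)`. -/
def Rpiece (μ ν : ℤ) : Submodule k (RR k) := weightedHomogeneousSubmodule k stw (μ, ν)

/-- the point of `𝔸⁴` corresponding to a pair of points of `𝔸²`. -/
def pt (a b : Fin 2 → k) : Fin 4 → k := ![a 0, a 1, b 0, b 1]

variable (f : Fin 4 → RR k)

/-- the set of base points of `φ` inside `ℙ¹ × ℙ¹`. -/
def BasePts : Set (Projectivization k (Fin 2 → k) × Projectivization k (Fin 2 → k)) :=
  {P | ∀ i, eval (pt k P.1.rep P.2.rep) (f i) = 0}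

/-- `(a,b) ∈ (𝔸²∖0)²` represents a base point of `φ`. -/
def IsBasePoint (a b : Fin 2 → k) : Prop :=
  a ≠ 0 ∧ b ≠ 0 ∧ ∀ i, eval (pt k a b) (f i) = 0

/-- the prime ideal of the point `((a₀:a₁),(b₀:b₁))` of `ℙ¹ × ℙ¹`. -/
def ptIdeal (a b : Fin 2 → k) : Ideal (RR k) :=
  Ideal.span {C (a 1) * X 0 - C (a 0) * X 1, C (b 1) * X 2 - C (b 0) * X 3}

/-- the ideal `J` is generated by at most `c` elements locally at the point
`((a₀:a₁),(b₀:b₁))` of `ℙ¹ × ℙ¹` (localization-free formulation). -/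
def LocGen (J : Ideal (RR k)) (a b : Fin 2 → k) (c : ℕ) : Prop :=
  ∃ h ∉ ptIdeal k a b, ∃ g : Fin c → RR k, (∀ j, g j ∈ J) ∧
    ∀ x ∈ J, ∃ t : ℕ, h ^ t * x ∈ Ideal.span (Set.range g)

/-- the Hilbert function of `R/J` in bidegree `(μ,ν)`. -/
def HFq (J : Ideal (RR k)) (μ ν : ℤ) : ℕ :=
  Module.finrank k ↥(Rpiece k μ ν) -
    Module.finrank k ↥(J.restrictScalars k ⊓ Rpiece k μ ν)

section LC

variable {B : Type} [CommRing B] {A : Type} [CommRing A] [Algebra B A]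
variable {M : Type} [AddCommGroup M] [Module A M] [Module B M] [IsScalarTower B A M]
variable (u : Fin 4 → A)

/-- Koszul sign. -/
def cechSign (J : Finset (Fin 4)) (j : Fin 4) : A := (-1 : A) ^ ((J.filter (· < j)).card)

/-- the differential of the Koszul cochain complex on the `t`-th powers of
`u₀,…,u₃`; the direct limit over `t` of its cohomology computes the local
cohomology `H^•_{(u₀,…,u₃)}(M)`. -/
def cechD (t : ℕ) : (Finset (Fin 4) → M) →ₗ[B] (Finset (Fin 4) → M) where
  toFun w J := ∑ j ∈ J, (cechSign (A := A) J j * u j ^ t) • w (J.erase j)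
  map_add' w w' := by funext J; simp [smul_add, Finset.sum_add_distrib]
  map_smul' c w := by
    funext J
    simp only [Pi.smul_apply, RingHom.id_apply, Finset.smul_sum]
    refine Finset.sum_congr rfl fun j hj => ?_
    rw [smul_comm]

/-- the transition chain map from level `t` to level `t+a`. -/
def cechTr (a : ℕ) : (Finset (Fin 4) → M) →ₗ[B] (Finset (Fin 4) → M) where
  toFun w J := ((∏ j ∈ J, u j) ^ a) • w J
  map_add' w w' := by funext J; simp
  map_smul' c w := by
    funext J
    simp only [Pi.smul_apply, RingHom.id_apply]
    rw [smul_comm]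

variable (P : ℤ → ℤ → Submodule B M)

/-- the bigraded piece `(μ,ν)` of the degree-`i` term of the Koszul cochain complex on
`u₀^t,…,u₃^t` (each `uⱼ` having bidegree `(1,1)`). -/
def cechC (t i : ℕ) (μ ν : ℤ) : Submodule B (Finset (Fin 4) → M) where
  carrier := {w | ∀ J, (J.card = i → w J ∈ P (μ + t * i) (ν + t * i)) ∧ (J.card ≠ i → w J = 0)}
  zero_mem' := by intro J; simp
  add_mem' := by
    rintro w w' hw hw' J
    refine ⟨fun h => add_mem ((hw J).1 h) ((hw' J).1 h), fun h => ?_⟩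
    simp [Pi.add_apply, (hw J).2 h, (hw' J).2 h]
  smul_mem' := by
    rintro c w hw J
    exact ⟨fun h => Submodule.smul_mem _ _ ((hw J).1 h), fun h => by simp [(hw J).2 h]⟩

/-- cocycles in bidegree `(μ,ν)` at level `t`. -/
def cocyc (t i : ℕ) (μ ν : ℤ) : Submodule B (Finset (Fin 4) → M) :=
  cechC P t i μ ν ⊓ LinearMap.ker (cechD u t)

/-- coboundaries in bidegree `(μ,ν)` at level `t`. -/
def cobd (t i : ℕ) (μ ν : ℤ) : Submodule B (Finset (Fin 4) → M) :=
  match i with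
  | 0 => ⊥
  | (j+1) => Submodule.map (cechD u t) (cechC P t j μ ν)

/-- Vanishing of the bigraded piece `H^i_{(u₀,…,u₃)}(M)_{(μ,ν)}` of local cohomology:
every cocycle at a finite level eventually becomes a coboundary in the direct limit. -/
def LCvanish (i : ℕ) (μ ν : ℤ) : Prop :=
  ∀ t : ℕ, ∀ w ∈ cocyc u P t i μ ν, ∃ a : ℕ, cechTr (B := B) u a w ∈ cobd u P (t + a) i μ ν

/-- the level-`t` cohomology of the graded piece; `H^i_{(u)}(M)_{(μ,ν)}` is the direct
limit over `t` of these. -/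
def cohPiece (t i : ℕ) (μ ν : ℤ) : Type :=
  ↥(cocyc u P t i μ ν) ⧸
    (Submodule.comap (cocyc u P t i μ ν).subtype (cobd u P t i μ ν))

instance (t i : ℕ) (μ ν : ℤ) : AddCommGroup (cohPiece u P t i μ ν) :=
  inferInstanceAs (AddCommGroup (↥(cocyc u P t i μ ν) ⧸
    (Submodule.comap (cocyc u P t i μ ν).subtype (cobd u P t i μ ν))))

instance (t i : ℕ) (μ ν : ℤ) : Module B (cohPiece u P t i μ ν) :=
  inferInstanceAs (Module B (↥(cocyc u P t i μ ν) ⧸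
    (Submodule.comap (cocyc u P t i μ ν).subtype (cobd u P t i μ ν))))

-- transition machinery
lemma cechTr_cechD (a t : ℕ) (w : Finset (Fin 4) → M) :
    cechTr (B := B) u a (cechD (B := B) u t w)
      = cechD (B := B) u (t + a) (cechTr (B := B) u a w) := by
  funext J
  show ((∏ j ∈ J, u j) ^ a) • (∑ j ∈ J, (cechSign (A := A) J j * u j ^ t) • w (J.erase j))
      = ∑ j ∈ J, (cechSign (A := A) J j * u j ^ (t + a)) •
          (((∏ j' ∈ J.erase j, u j') ^ a) • w (J.erase j))
  rw [Finset.smul_sum]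
  refine Finset.sum_congr rfl fun j hj => ?_
  rw [smul_smul, smul_smul]
  congr 1
  have hprod : ∏ j' ∈ J, u j' = u j * ∏ j' ∈ J.erase j, u j' :=
    (Finset.mul_prod_erase J u hj).symm
  rw [hprod, mul_pow, pow_add]
  ring

/-- a "degree-shift" compatibility hypothesis for the bigrading `P`: multiplication by
the `a`-th power of the product of the `u j`, `j ∈ J`, with `|J| = i`, shifts a graded
piece as expected. This holds for the natural bigradings used in this paper. -/
def TrComp : Prop :=
  ∀ (a t i : ℕ) (μ ν : ℤ), ∀ w ∈ cechC P t i μ ν,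
    cechTr (B := B) u a w ∈ cechC P (t + a) i μ ν

lemma tr_cocyc (hc : TrComp u P) {a t i : ℕ} {μ ν : ℤ} {w : Finset (Fin 4) → M}
    (hw : w ∈ cocyc u P t i μ ν) : cechTr (B := B) u a w ∈ cocyc u P (t + a) i μ ν := by
  refine ⟨hc a t i μ ν w hw.1, ?_⟩
  have h2 : cechD (B := B) u t w = 0 := hw.2
  show cechD (B := B) u (t + a) (cechTr (B := B) u a w) = 0
  rw [← cechTr_cechD, h2, map_zero]

lemma tr_cobd (hc : TrComp u P) {a t i : ℕ} {μ ν : ℤ} {w : Finset (Fin 4) → M}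
    (hw : w ∈ cobd u P t i μ ν) : cechTr (B := B) u a w ∈ cobd u P (t + a) i μ ν := by
  cases i with
  | zero =>
      simp only [cobd, Submodule.mem_bot] at hw ⊢
      rw [hw, map_zero]
  | succ j =>
      obtain ⟨v, hv, rfl⟩ := hw
      exact ⟨cechTr (B := B) u a v, hc a t j μ ν v hv, (cechTr_cechD u a t v).symm⟩

/-- the transition map between the level-`t` and level-`t'` cohomologies of the
graded piece. -/
def cohTrans (hc : TrComp u P) (i : ℕ) (μ ν : ℤ) {t t' : ℕ} (h : t ≤ t') :
    cohPiece u P t i μ ν →ₗ[B] cohPiece u P t' i μ ν :=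
  Submodule.mapQ _ _
    ((cechTr (B := B) u (t' - t)).restrict (p := cocyc u P t i μ ν)
      (q := cocyc u P t' i μ ν)
      (fun x hx => by
        have := tr_cocyc u P hc (a := t' - t) hx
        rwa [Nat.add_sub_cancel' h] at this))
    (by
      intro x hx
      simp only [Submodule.mem_comap] at hx ⊢
      show cechTr (B := B) u (t' - t) ↑x ∈ cobd u P t' i μ ν
      have := tr_cobd u P hc (a := t' - t) hx
      rwa [Nat.add_sub_cancel' h] at this)

/-- the bigraded piece `H^i_{(u₀,…,u₃)}(M)_{(μ,ν)}` of local cohomology, as the direct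
limit over `t` of the cohomologies of the Koszul cochain complexes on the `t`-th
powers of the `u j`. -/
def LCH (hc : TrComp u P) (i : ℕ) (μ ν : ℤ) : Type :=
  Module.DirectLimit (R := B) (ι := ℕ) (fun t => cohPiece u P t i μ ν)
    (fun _ _ h => cohTrans u P hc i μ ν h)

instance (hc : TrComp u P) (i : ℕ) (μ ν : ℤ) : AddCommGroup (LCH u P hc i μ ν) :=
  inferInstanceAs (AddCommGroup (Module.DirectLimit _ _))

instance (hc : TrComp u P) (i : ℕ) (μ ν : ℤ) : Module B (LCH u P hc i μ ν) :=
  inferInstanceAs (Module B (Module.DirectLimit _ _))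


end LC

/-- the four generators `s₀t₀, s₀t₁, s₁t₀, s₁t₁` of the irrelevant ideal
`𝔪 = (s₀,s₁)(t₀,t₁)` of `R`. -/
def uR : Fin 4 → RR k := fun i =>
  X (⟨(i : ℕ) / 2, by omega⟩ : Fin 4) * X (⟨2 + (i : ℕ) % 2, by omega⟩ : Fin 4)
/-- the Koszul differential `K_{p+1} → K_p` of `f` (on `p`-tensors): contraction with
`f` in the first slot. -/
def DK (p : ℕ) : ((Fin (p + 1) → Fin 4) → RR k) →ₗ[RR k] ((Fin p → Fin 4) → RR k) where
  toFun W a := ∑ i, W (Fin.cons i a) * f i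
  map_add' W W' := by funext a; simp [add_mul, Finset.sum_add_distrib]
  map_smul' c W := by
    funext a
    simp only [Pi.smul_apply, smul_eq_mul, RingHom.id_apply, Finset.mul_sum]
    exact Finset.sum_congr rfl fun i _ => by ring

/-- the alternating `p`-tensors: the Koszul module `K_p = Λ^p R⁴`. -/
def AltT (p : ℕ) : Submodule (RR k) ((Fin p → Fin 4) → RR k) where
  carrier := {W | ∀ (a : Fin p → Fin 4) (i j : Fin p), i ≠ j →
    ((a i = a j → W a = 0) ∧ W (a ∘ Equiv.swap i j) = - W a)}
  zero_mem' := by intro a i j hij; simp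
  add_mem' := by
    rintro W W' hW hW' a i j hij
    refine ⟨fun h => ?_, ?_⟩
    · simp [Pi.add_apply, (hW a i j hij).1 h, (hW' a i j hij).1 h]
    · simp [Pi.add_apply, (hW a i j hij).2, (hW' a i j hij).2]
      ring
  smul_mem' := by
    rintro c W hW a i j hij
    refine ⟨fun h => ?_, ?_⟩
    · simp [Pi.smul_apply, (hW a i j hij).1 h]
    · simp [Pi.smul_apply, (hW a i j hij).2]

/-- the `p`-cycles `Z_p` of the Koszul complex `K_•(f;R)`. -/
def ZK (p : ℕ) : Submodule (RR k) ((Fin p → Fin 4) → RR k) :=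
  match p with
  | 0 => AltT k 0
  | (q + 1) => AltT k (q + 1) ⊓ LinearMap.ker (DK k f q)

/-- the `p`-boundaries `B_p` of the Koszul complex `K_•(f;R)`. -/
def BK (p : ℕ) : Submodule (RR k) ((Fin p → Fin 4) → RR k) :=
  Submodule.map (DK k f p) (AltT k (p + 1))

/-- the Koszul homology module `H_p = Z_p/B_p` of `f`. -/
def HK (p : ℕ) : Type :=
  ↥(ZK k f p) ⧸ (Submodule.comap (ZK k f p).subtype (BK k f p))

instance (p : ℕ) : AddCommGroup (HK k f p) :=
  inferInstanceAs (AddCommGroup (↥(ZK k f p) ⧸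
    (Submodule.comap (ZK k f p).subtype (BK k f p))))

instance (p : ℕ) : Module (RR k) (HK k f p) :=
  inferInstanceAs (Module (RR k) (↥(ZK k f p) ⧸
    (Submodule.comap (ZK k f p).subtype (BK k f p))))

instance (p : ℕ) : Module k (HK k f p) :=
  inferInstanceAs (Module k (↥(ZK k f p) ⧸
    (Submodule.comap (ZK k f p).subtype (BK k f p))))

instance (p : ℕ) : IsScalarTower k (RR k) (HK k f p) :=
  inferInstanceAs (IsScalarTower k (RR k) (↥(ZK k f p) ⧸
    (Submodule.comap (ZK k f p).subtype (BK k f p))))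

/-- the bidegree-`(μ,ν)` piece of the Koszul module `K_p ≅ ⊕ R(−pm,−pn)` (ambient
`p`-tensors). -/
def KP (m n : ℕ) (p : ℕ) (μ ν : ℤ) : Submodule k ((Fin p → Fin 4) → RR k) :=
  ⨅ a : Fin p → Fin 4,
    (Rpiece k (μ - p * m) (ν - p * n)).comap (LinearMap.proj a)

/-- the bidegree-`(μ,ν)` piece of the cycles `Z_p`. -/
def PZ (m n : ℕ) (p : ℕ) (μ ν : ℤ) : Submodule k ↥(ZK k f p) :=
  Submodule.comap (((ZK k f p).subtype).restrictScalars k) (KP k m n p μ ν)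

/-- the bidegree-`(μ,ν)` piece of the Koszul homology `H_p`. -/
def PH (m n : ℕ) (p : ℕ) (μ ν : ℤ) : Submodule k (HK k f p) :=
  Submodule.map
    (((Submodule.comap (ZK k f p).subtype (BK k f p)).mkQ).restrictScalars k)
    (PZ k f m n p μ ν)


/-- the `𝔪`-torsion of the bidegree-`(μ,ν)` piece of the Koszul homology `H_q`,
i.e. `H⁰_𝔪(H_q)_{(μ,ν)}`. -/
def TorPH (m n : ℕ) (q : ℕ) (μ ν : ℤ) : Submodule k (HK k f q) where
  carrier := {x | x ∈ PH k f m n q μ ν ∧ ∃ t : ℕ, ∀ i, (uR k i) ^ t • x = 0}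
  zero_mem' := ⟨Submodule.zero_mem _, 0, fun i => smul_zero _⟩
  add_mem' := by
    rintro x y ⟨hx, tx, htx⟩ ⟨hy, ty, hty⟩
    refine ⟨Submodule.add_mem _ hx hy, tx + ty, fun i => ?_⟩
    have h1 : (uR k i) ^ (tx + ty) • x = 0 := by
      rw [pow_add, mul_comm, mul_smul, htx i, smul_zero]
    have h2 : (uR k i) ^ (tx + ty) • y = 0 := by
      rw [pow_add, mul_smul, hty i, smul_zero]
    rw [smul_add, h1, h2, add_zero]
  smul_mem' := by
    rintro c x ⟨hx, tx, htx⟩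
    refine ⟨Submodule.smul_mem _ _ hx, tx, fun i => ?_⟩
    rw [smul_comm, htx i, smul_zero]

section TopCohomology

variable {k : Type} [Field k]

/-- For `g ≠ 0`, every inverse monomial `x^{-γ}` of the top local cohomology of a polynomial ring
is a multiple of `g`. -/
lemma exists_forall_monomial_mem_span {g : RR k} (hg : g ≠ 0) (γ : Fin 4 →₀ ℕ) :
    ∃ T₀ : ℕ, ∀ T ≥ T₀, ∀ δ : Fin 4 →₀ ℕ, (∀ i, δ i + γ i = T) →
      monomial δ (1 : k) ∈ Ideal.span (insert g (Set.range fun i => (X i : RR k) ^ T)) := by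
  classical
  let o : MonomialOrder (Fin 4) := MonomialOrder.lex
  obtain ⟨α, hα, hmin⟩ := g.support.exists_min_image o.toSyn (support_nonempty.mpr hg)
  induction hs : o.toSyn γ using WellFoundedLT.induction generalizing γ with
  | ind s ih =>
  subst hs
  have hex : ∀ β : Fin 4 →₀ ℕ, ∃ T₀ : ℕ, β ∈ g.support → β ≠ α → β ≤ γ + α →
      ∀ T ≥ T₀, ∀ δ : Fin 4 →₀ ℕ, (∀ i, δ i + (γ + α - β) i = T) →
        monomial δ (1 : k) ∈ Ideal.span (insert g (Set.range fun i => (X i : RR k) ^ T)) := by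
    intro β
    by_cases h : β ∈ g.support ∧ β ≠ α ∧ β ≤ γ + α
    · obtain ⟨hβ, hne, hle⟩ := h
      have hlt : o.toSyn (γ + α - β) < o.toSyn γ := by
        have h1 : o.toSyn α < o.toSyn β :=
          lt_of_le_of_ne (hmin β hβ) fun h => hne (o.toSyn.injective h).symm
        have h2 : o.toSyn (γ + α - β) + o.toSyn β = o.toSyn γ + o.toSyn α := by
          rw [← map_add, ← map_add, tsub_add_cancel_of_le hle]
        by_contra hcon
        exact absurd h2 (add_lt_add_of_le_of_lt (not_lt.mp hcon) h1).ne'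
      obtain ⟨T₀, hT₀⟩ := ih _ hlt _ rfl
      exact ⟨T₀, fun _ _ _ => hT₀⟩
    · exact ⟨0, fun h1 h2 h3 => absurd ⟨h1, h2, h3⟩ h⟩
  choose T₀ hT₀ using hex
  refine ⟨g.support.sup T₀ + ∑ i, (γ i + α i), fun T hT δ hδ => ?_⟩
  have hγα : ∀ i, γ i + α i ≤ T := fun i =>
    (Finset.single_le_sum (f := fun i => γ i + α i) (fun _ _ => Nat.zero_le _)
      (Finset.mem_univ i)).trans ((Nat.le_add_left _ _).trans hT)
  have hαδ : α ≤ δ := fun i => by have := hγα i; have := hδ i; omega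
  set I := Ideal.span (insert g (Set.range fun i => (X i : RR k) ^ T)) with hI
  have hsum : monomial (δ - α) (1 : k) * g =
      ∑ β ∈ g.support, C (coeff β g) * monomial (δ - α + β) (1 : k) := by
    conv_lhs => rw [g.as_sum, Finset.mul_sum]
    refine Finset.sum_congr rfl fun β _ => ?_
    rw [monomial_mul, C_mul_monomial, one_mul, mul_one]
  rw [← Finset.add_sum_erase _ _ hα, tsub_add_cancel_of_le hαδ] at hsum
  have hterm : ∀ β ∈ g.support.erase α, C (coeff β g) * monomial (δ - α + β) (1 : k) ∈ I := by
    intro β hβ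
    obtain ⟨hne, hβ⟩ := Finset.mem_erase.mp hβ
    refine I.mul_mem_left _ ?_
    by_cases hle : β ≤ γ + α
    · refine hT₀ β hβ hne hle T
        ((Finset.le_sup (f := T₀) hβ).trans ((Nat.le_add_right _ _).trans hT)) _ fun i => ?_
      have := hγα i
      have := hδ i
      have := hle i
      simp only [Finsupp.add_apply, Finsupp.tsub_apply] at this ⊢
      omega
    · obtain ⟨i, hi⟩ : ∃ i, ¬ β i ≤ (γ + α) i := by
        by_contra hcon
        exact hle fun i => not_not.mp fun h => hcon ⟨i, h⟩
      have hmem : (X i : RR k) ^ T ∈ I := Ideal.subset_span (Set.mem_insert_of_mem _ ⟨i, rfl⟩)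
      refine I.mem_of_dvd ?_ hmem
      rw [X_pow_eq_monomial, monomial_dvd_monomial]
      refine ⟨Or.inr ?_, dvd_rfl⟩
      rw [Finsupp.single_le_iff]
      have := hγα i
      have := hδ i
      simp only [Finsupp.add_apply, Finsupp.tsub_apply] at hi ⊢
      omega
  have hlead : C (coeff α g) * monomial δ (1 : k) ∈ I := by
    rw [eq_sub_of_add_eq hsum.symm]
    exact I.sub_mem (I.mul_mem_left _ (Ideal.subset_span (Set.mem_insert _ _)))
      (I.sum_mem hterm)
  have := I.mul_mem_left (C (coeff α g)⁻¹) hlead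
  rwa [← mul_assoc, ← C_mul, inv_mul_cancel₀ (mem_support_iff.mp hα), C_1, one_mul] at this

/-- The product of the four variables, a bihomogeneous polynomial of bidegree `(2,2)`. -/
def prodX : RR k := X 0 * X 1 * X 2 * X 3

lemma exists_prodX_pow_eq {g : RR k} (hg : g ≠ 0) (N : ℕ) :
    ∃ (a : ℕ) (q : RR k) (h : Fin 4 → RR k),
      prodX ^ a = q * g + ∑ i, h i * X i ^ (N + a) := by
  obtain ⟨T₀, hT₀⟩ := exists_forall_monomial_mem_span hg (Finsupp.equivFunOnFinite.symm fun _ => N)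
  have hmem := hT₀ (N + T₀) (Nat.le_add_left _ _) (Finsupp.equivFunOnFinite.symm fun _ => T₀)
    fun i => by simp [add_comm]
  rw [Ideal.mem_span_insert] at hmem
  obtain ⟨q, z, hz, hqz⟩ := hmem
  obtain ⟨h, hh⟩ := Ideal.mem_span_range_iff_exists_fun.mp hz
  refine ⟨T₀, q, h, ?_⟩
  rw [hh, ← hqz, monomial_eq, Finsupp.prod_fintype _ _ (by simp), Fin.prod_univ_four]
  simp [prodX, mul_pow]

end TopCohomology

section Grading

variable {k : Type} [Field k]

lemma Rpiece_mul {a b c d : ℤ} {x y : RR k} (hx : x ∈ Rpiece k a b) (hy : y ∈ Rpiece k c d) :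
    x * y ∈ Rpiece k (a + c) (b + d) :=
  IsWeightedHomogeneous.mul hx hy

lemma Rpiece_pow {a b : ℤ} {x : RR k} (hx : x ∈ Rpiece k a b) (t : ℕ) :
    x ^ t ∈ Rpiece k (t * a) (t * b) := by
  have h := IsWeightedHomogeneous.pow hx t
  have e : t • (a, b) = ((t : ℤ) * a, (t : ℤ) * b) := by simp
  rw [e] at h
  exact h

lemma X_mem_Rpiece (i : Fin 4) : (X i : RR k) ∈ Rpiece k (stw i).1 (stw i).2 :=
  isWeightedHomogeneous_X k stw i

lemma uR_mem_Rpiece (j : Fin 4) : uR k j ∈ Rpiece k 1 1 := by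
  have h := Rpiece_mul (X_mem_Rpiece (k := k) (⟨(j : ℕ) / 2, by omega⟩ : Fin 4))
    (X_mem_Rpiece (k := k) (⟨2 + (j : ℕ) % 2, by omega⟩ : Fin 4))
  fin_cases j <;> simpa [uR, stw] using h

lemma prodX_mem_Rpiece : (prodX : RR k) ∈ Rpiece k 2 2 := by
  have h := Rpiece_mul (Rpiece_mul (Rpiece_mul (X_mem_Rpiece (k := k) 0) (X_mem_Rpiece 1))
    (X_mem_Rpiece 2)) (X_mem_Rpiece 3)
  simpa [prodX, stw] using h

variable (k) in
/-- The projection of `R` onto its piece of bidegree `(μ,ν)`. -/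
def Rproj (μ ν : ℤ) : RR k →ₗ[k] RR k := weightedHomogeneousComponent stw (μ, ν)

lemma Rproj_mem (μ ν : ℤ) (x : RR k) : Rproj k μ ν x ∈ Rpiece k μ ν :=
  weightedHomogeneousComponent_mem _ _ _

lemma Rproj_eq_self {μ ν : ℤ} {x : RR k} (hx : x ∈ Rpiece k μ ν) : Rproj k μ ν x = x :=
  weightedHomogeneousComponent_eq_self hx

lemma Rproj_mul {a b c d : ℤ} {g : RR k} (hg : g ∈ Rpiece k c d) (x : RR k) :
    Rproj k (a + c) (b + d) (x * g) = Rproj k a b x * g := by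
  classical
  induction x using MvPolynomial.induction_on' with
  | monomial s r =>
    have h1 : monomial s r ∈ weightedHomogeneousSubmodule k stw (Finsupp.weight stw s) :=
      isWeightedHomogeneous_monomial _ _ _ rfl
    have h2 : monomial s r * g ∈ weightedHomogeneousSubmodule k stw
        (Finsupp.weight stw s + (c, d)) := IsWeightedHomogeneous.mul h1 hg
    rw [Rproj, Rproj, weightedHomogeneousComponent_of_mem h1,
      weightedHomogeneousComponent_of_mem h2, ← Prod.mk_add_mk, ite_mul, zero_mul]
    simp only [add_left_inj]
  | add x y hx hy => rw [add_mul, map_add, map_add, hx, hy, add_mul]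

lemma mem_Rpiece_of_mul_mem {a b c d : ℤ} {g x : RR k} (hg0 : g ≠ 0) (hg : g ∈ Rpiece k c d)
    (h : x * g ∈ Rpiece k (a + c) (b + d)) : x ∈ Rpiece k a b := by
  have h1 := Rproj_mul (a := a) (b := b) hg x
  rw [Rproj_eq_self h] at h1
  rw [mul_right_cancel₀ hg0 h1]
  exact Rproj_mem _ _ _

end Grading

section Cech

variable {k : Type} [Field k]
variable {M : Type} [AddCommGroup M] [Module k M]

lemma mem_piece_of_eq {P : ℤ → ℤ → Submodule k M} {a b a' b' : ℤ} {x : M} (hx : x ∈ P a b)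
    (ha : a = a') (hb : b = b') : x ∈ P a' b' := by
  subst ha hb; exact hx

lemma eq_of_mem_cechC_three {P : ℤ → ℤ → Submodule k M} {t : ℕ} {μ ν : ℤ}
    {w w' : Finset (Fin 4) → M}
    (hw : w ∈ cechC P t 3 μ ν) (hw' : w' ∈ cechC P t 3 μ ν)
    (h0 : w {0, 1, 2} = w' {0, 1, 2}) (h1 : w {0, 1, 3} = w' {0, 1, 3})
    (h2 : w {0, 2, 3} = w' {0, 2, 3}) (h3 : w {1, 2, 3} = w' {1, 2, 3}) : w = w' := by
  have key : ∀ J : Finset (Fin 4), J.card = 3 →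
      J = {0, 1, 2} ∨ J = {0, 1, 3} ∨ J = {0, 2, 3} ∨ J = {1, 2, 3} := by decide
  funext J
  by_cases hJ : J.card = 3
  · rcases key J hJ with rfl | rfl | rfl | rfl <;> assumption
  · rw [(hw J).2 hJ, (hw' J).2 hJ]

variable [Module (RR k) M]

lemma cechSign_mul_mem {P : ℤ → ℤ → Submodule k M} {a b : ℤ} (J : Finset (Fin 4)) (j : Fin 4)
    {x : M} (r : RR k) (hx : r • x ∈ P a b) : (cechSign (A := RR k) J j * r) • x ∈ P a b := by
  rw [mul_smul, cechSign]
  rcases neg_one_pow_eq_or (RR k) (J.filter (· < j)).card with h | h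
  · rwa [h, one_smul]
  · rw [h, neg_one_smul]
    exact neg_mem hx

variable [IsScalarTower k (RR k) M]

/-- Compatibility of the pieces `P μ ν` of a module with the bigrading of `R`. -/
def MulCompat (P : ℤ → ℤ → Submodule k M) : Prop :=
  ∀ {a b c d : ℤ} {r : RR k} {x : M}, r ∈ Rpiece k a b → x ∈ P c d → r • x ∈ P (a + c) (b + d)

lemma cechD_apply (t : ℕ) (w : Finset (Fin 4) → M) (J : Finset (Fin 4)) :
    cechD (B := k) (uR k) t w J =
      ∑ j ∈ J, (cechSign (A := RR k) J j * uR k j ^ t) • w (J.erase j) := rfl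

lemma cechTr_apply (a : ℕ) (w : Finset (Fin 4) → M) (J : Finset (Fin 4)) :
    cechTr (B := k) (uR k) a w J = (∏ j ∈ J, uR k j) ^ a • w J := rfl

lemma cechTr_cechTr (a b : ℕ) (w : Finset (Fin 4) → M) :
    cechTr (B := k) (uR k) a (cechTr (B := k) (uR k) b w) = cechTr (B := k) (uR k) (b + a) w := by
  funext J
  rw [cechTr_apply, cechTr_apply, cechTr_apply, smul_smul, ← pow_add, add_comm]

lemma cechTr_zero (w : Finset (Fin 4) → M) : cechTr (B := k) (uR k) 0 w = w := by
  funext J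
  rw [cechTr_apply, pow_zero, one_smul]

lemma prod_uR_pow_mem_Rpiece (J : Finset (Fin 4)) (a : ℕ) :
    (∏ j ∈ J, uR k j) ^ a ∈ Rpiece k (a * J.card) (a * J.card) := by
  have h : ∏ j ∈ J, uR k j ∈ Rpiece k J.card J.card := by
    have := IsWeightedHomogeneous.prod (w := stw) J (uR k) (fun _ => ((1, 1) : ℤ × ℤ))
      fun j _ => uR_mem_Rpiece j
    have e : ∑ _j ∈ J, ((1, 1) : ℤ × ℤ) = ((J.card : ℤ), (J.card : ℤ)) := by simp
    rw [e] at this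
    exact this
  exact Rpiece_pow h a

lemma uR_pow_mem_Rpiece (j : Fin 4) (t : ℕ) : uR k j ^ t ∈ Rpiece k t t := by
  simpa using Rpiece_pow (uR_mem_Rpiece (k := k) j) t

variable {P : ℤ → ℤ → Submodule k M}

lemma MulCompat.trComp (hP : MulCompat P) : TrComp (uR k) P := by
  intro a t i μ ν w hw J
  rw [cechTr_apply]
  refine ⟨fun h => ?_, fun h => ?_⟩
  · refine mem_piece_of_eq (hP (prod_uR_pow_mem_Rpiece J a) ((hw J).1 h)) ?_ ?_ <;>
      rw [h] <;> push_cast <;> ring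
  · rw [(hw J).2 h, smul_zero]

lemma cechD_mem_cechC (hP : MulCompat P) {t i : ℕ} {μ ν : ℤ} {w : Finset (Fin 4) → M}
    (hw : w ∈ cechC P t i μ ν) : cechD (B := k) (uR k) t w ∈ cechC P t (i + 1) μ ν := by
  intro J
  rw [cechD_apply]
  refine ⟨fun h => sum_mem fun j hj => ?_, fun h => Finset.sum_eq_zero fun j hj => ?_⟩
  · refine cechSign_mul_mem _ _ _ (mem_piece_of_eq (hP (uR_pow_mem_Rpiece j t)
      ((hw (J.erase j)).1 (by rw [Finset.card_erase_of_mem hj, h]; rfl))) ?_ ?_) <;>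
      push_cast <;> ring
  · rw [(hw (J.erase j)).2, smul_zero]
    rw [Finset.card_erase_of_mem hj]
    have := Finset.card_pos.mpr ⟨j, hj⟩
    omega

lemma cechSign_mul_cechSign (J : Finset (Fin 4)) {i j : Fin 4} (hi : i ∈ J) (hj : j ∈ J)
    (hij : i ≠ j) : cechSign (A := RR k) J j * cechSign (J.erase j) i =
      - (cechSign (A := RR k) J i * cechSign (J.erase i) j) := by
  have key : ∀ (J : Finset (Fin 4)) (i j : Fin 4), i ∈ J → j ∈ J → i ≠ j →
      ((J.filter (· < j)).card + ((J.erase j).filter (· < i)).card) % 2 =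
      ((J.filter (· < i)).card + ((J.erase i).filter (· < j)).card + 1) % 2 := by decide
  simp only [cechSign, ← pow_add]
  rw [neg_one_pow_eq_pow_mod_two, key J i j hi hj hij, ← neg_one_pow_eq_pow_mod_two, pow_succ,
    mul_neg_one]

lemma cechD_cechD (t : ℕ) (w : Finset (Fin 4) → M) :
    cechD (B := k) (uR k) t (cechD (B := k) (uR k) t w) = 0 := by
  funext J
  simp only [cechD_apply, Finset.smul_sum, smul_smul, Pi.zero_apply]
  rw [Finset.sum_sigma']
  refine Finset.sum_involution (fun x _ => ⟨x.2, x.1⟩) ?_ ?_ ?_ ?_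
  · rintro ⟨j, i⟩ h
    simp only [Finset.mem_sigma, Finset.mem_erase] at h
    have hs := cechSign_mul_cechSign (k := k) J h.2.2 h.1 h.2.1
    rw [Finset.erase_right_comm, ← add_smul]
    convert zero_smul (RR k) _
    linear_combination (uR k j ^ t * uR k i ^ t) * hs
  · rintro ⟨j, i⟩ h _ heq
    simp only [Finset.mem_sigma, Finset.mem_erase] at h
    exact h.2.1 (congrArg Sigma.fst heq)
  · rintro ⟨j, i⟩ h
    simp only [Finset.mem_sigma, Finset.mem_erase] at h ⊢
    exact ⟨h.2.2, h.2.1.symm, h.1⟩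
  · intros; rfl

lemma cechD_singleton (t : ℕ) (w : Finset (Fin 4) → M) (i : Fin 4) :
    cechD (B := k) (uR k) t w {i} = uR k i ^ t • w ∅ := by
  simp [cechD_apply, cechSign, Finset.filter_singleton]

lemma cechD_pair (t : ℕ) (w : Finset (Fin 4) → M) {i j : Fin 4} (hij : i < j) :
    cechD (B := k) (uR k) t w {i, j} = uR k i ^ t • w {j} - uR k j ^ t • w {i} := by
  have h1 : ({i, j} : Finset (Fin 4)).erase i = {j} := by
    ext x; simp only [Finset.mem_erase, Finset.mem_insert, Finset.mem_singleton]; grind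
  have h2 : ({i, j} : Finset (Fin 4)).erase j = {i} := by
    ext x; simp only [Finset.mem_erase, Finset.mem_insert, Finset.mem_singleton]; grind
  have h3 : ({i, j} : Finset (Fin 4)).filter (· < i) = ∅ := by
    ext x; simp only [Finset.mem_filter, Finset.mem_insert, Finset.mem_singleton]; grind
  have h4 : ({i, j} : Finset (Fin 4)).filter (· < j) = {i} := by
    ext x; simp only [Finset.mem_filter, Finset.mem_insert, Finset.mem_singleton]; grind
  rw [cechD_apply, Finset.sum_pair hij.ne, h1, h2]
  simp [cechSign, h3, h4, sub_eq_add_neg]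

lemma cechD_triple (t : ℕ) (w : Finset (Fin 4) → M) {i j l : Fin 4} (hij : i < j) (hjl : j < l) :
    cechD (B := k) (uR k) t w {i, j, l} =
      uR k i ^ t • w {j, l} - uR k j ^ t • w {i, l} + uR k l ^ t • w {i, j} := by
  have key : ∀ i j l : Fin 4, i < j → j < l →
      ({i, j, l} : Finset (Fin 4)).erase i = {j, l} ∧ ({i, j, l} : Finset (Fin 4)).erase j = {i, l} ∧
      ({i, j, l} : Finset (Fin 4)).erase l = {i, j} ∧
      (({i, j, l} : Finset (Fin 4)).filter (· < i)).card = 0 ∧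
      (({i, j, l} : Finset (Fin 4)).filter (· < j)).card = 1 ∧
      (({i, j, l} : Finset (Fin 4)).filter (· < l)).card = 2 := by decide
  obtain ⟨h1, h2, h3, h4, h5, h6⟩ := key i j l hij hjl
  have hi : i ∉ ({j, l} : Finset (Fin 4)) := by simp [hij.ne, (hij.trans hjl).ne]
  rw [cechD_apply, Finset.sum_insert hi, Finset.sum_pair hjl.ne, h1, h2, h3]
  simp only [cechSign, h4, h5, h6, pow_zero, pow_one, one_mul, neg_mul, neg_smul, neg_sq, one_pow]
  abel

lemma cechD_univ (t : ℕ) (w : Finset (Fin 4) → M) :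
    cechD (B := k) (uR k) t w Finset.univ =
      uR k 0 ^ t • w {1, 2, 3} - uR k 1 ^ t • w {0, 2, 3} + uR k 2 ^ t • w {0, 1, 3} -
        uR k 3 ^ t • w {0, 1, 2} := by
  have h0 : (Finset.univ : Finset (Fin 4)).erase 0 = {1, 2, 3} := by decide
  have h1 : (Finset.univ : Finset (Fin 4)).erase 1 = {0, 2, 3} := by decide
  have h2 : (Finset.univ : Finset (Fin 4)).erase 2 = {0, 1, 3} := by decide
  have h3 : (Finset.univ : Finset (Fin 4)).erase 3 = {0, 1, 2} := by decide
  have c0 : ((Finset.univ : Finset (Fin 4)).filter (· < 0)).card = 0 := by decide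
  have c1 : ((Finset.univ : Finset (Fin 4)).filter (· < 1)).card = 1 := by decide
  have c2 : ((Finset.univ : Finset (Fin 4)).filter (· < 2)).card = 2 := by decide
  have c3 : ((Finset.univ : Finset (Fin 4)).filter (· < 3)).card = 3 := by decide
  rw [cechD_apply, Fin.sum_univ_four, h0, h1, h2, h3]
  simp only [cechSign, c0, c1, c2, c3, pow_zero, pow_one, one_mul, neg_mul, neg_smul, neg_sq,
    one_pow, Odd.neg_one_pow (by decide : Odd 3)]
  abel

end Cech

section Symbols

variable {k : Type} [Field k]
variable {M : Type} [AddCommGroup M] [Module k M]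

lemma single_mem_cechC {P : ℤ → ℤ → Submodule k M} {t : ℕ} {i : ℕ} {μ ν : ℤ}
    {J : Finset (Fin 4)} {x : M} (hJ : J.card = i) (hx : x ∈ P (μ + t * i) (ν + t * i)) :
    Pi.single J x ∈ cechC P t i μ ν := by
  intro J'
  rcases eq_or_ne J' J with rfl | h
  · exact ⟨fun _ => by simpa using hx, fun h => absurd hJ h⟩
  · rw [Pi.single_eq_of_ne h]
    exact ⟨fun _ => zero_mem _, fun _ => rfl⟩

lemma uR_zero : uR k 0 = X 0 * X 2 := rfl
lemma uR_one : uR k 1 = X 0 * X 3 := rfl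
lemma uR_two : uR k 2 = X 1 * X 2 := rfl
lemma uR_three : uR k 3 = X 1 * X 3 := rfl

lemma prod_uR_triple {i j l : Fin 4} (hij : i < j) (hjl : j < l) :
    ∏ x ∈ {i, j, l}, uR k x = uR k i * (uR k j * uR k l) := by
  rw [Finset.prod_insert (by simp [hij.ne, (hij.trans hjl).ne]), Finset.prod_pair hjl.ne]

lemma X_pow_mem_Rpiece (i : Fin 4) (t : ℕ) :
    (X i : RR k) ^ t ∈ Rpiece k (t * (stw i).1) (t * (stw i).2) :=
  Rpiece_pow (X_mem_Rpiece i) t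

variable [Module (RR k) M]

/-- Every fraction `x / (s₀s₁t₀t₁)^N` of bidegree `(μ,ν)` is a sum of four fractions, each having
a denominator that omits one of the variables. This is the vanishing of the bigraded piece of
`H⁴_{(s₀,s₁,t₀,t₁)}(M) ≅ H³_𝔪(M)`. -/
def FracVanish (P : ℤ → ℤ → Submodule k M) (μ ν : ℤ) : Prop :=
  ∀ (N : ℕ), ∀ x ∈ P (μ + 2 * N) (ν + 2 * N), ∃ (a : ℕ) (y : Fin 4 → M),
    (∀ i, y i ∈ P (μ + 2 * (N + a : ℕ) - (N + a : ℕ) * (stw i).1)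
      (ν + 2 * (N + a : ℕ) - (N + a : ℕ) * (stw i).2)) ∧
    (prodX : RR k) ^ a • x = ∑ i, (X i : RR k) ^ (N + a) • y i

variable [IsScalarTower k (RR k) M] {P : ℤ → ℤ → Submodule k M}

lemma fracVanish_of_LCvanish (hP : MulCompat P) {μ ν : ℤ}
    (h : LCvanish (B := k) (uR k) P 3 μ ν) : FracVanish P μ ν := by
  intro t x hx
  let w : Finset (Fin 4) → M :=
    Pi.single {0, 1, 2} (uR k 0 ^ t • x) + Pi.single {0, 1, 3} (uR k 1 ^ t • x)
  have hux : ∀ j, uR k j ^ t • x ∈ P (μ + t * (3 : ℕ)) (ν + t * (3 : ℕ)) := fun j =>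
    mem_piece_of_eq (hP (uR_pow_mem_Rpiece j t) hx) (by push_cast; ring) (by push_cast; ring)
  have hw : w ∈ cechC P t 3 μ ν :=
    add_mem (single_mem_cechC (by decide) (hux 0)) (single_mem_cechC (by decide) (hux 1))
  have hD : cechD (B := k) (uR k) t w = 0 := by
    funext J
    by_cases hJ : J.card = 4
    · obtain rfl : J = Finset.univ := Finset.eq_univ_of_card J hJ
      rw [cechD_univ]
      simp +decide only [w, Pi.add_apply, Pi.single_apply, if_true, if_false, smul_zero, zero_add,
        add_zero, sub_zero, Pi.zero_apply, uR_zero, uR_one, uR_two, uR_three]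
      module
    · exact (cechD_mem_cechC hP hw J).2 hJ
  obtain ⟨a, v, hv, hvw⟩ := h t w ⟨hw, hD⟩
  have e1 := congrFun hvw {0, 1, 2}
  have e2 := congrFun hvw {1, 2, 3}
  rw [cechD_triple _ _ (by decide) (by decide), cechTr_apply,
      prod_uR_triple (by decide) (by decide)] at e1 e2
  simp +decide only [w, Pi.add_apply, Pi.single_apply, if_true, if_false, smul_zero, add_zero,
    uR_zero, uR_one, uR_two, uR_three] at e1 e2
  have hmem : ∀ (r : RR k) (c d : ℤ) (J : Finset (Fin 4)), r ∈ Rpiece k c d → J.card = 2 →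
      r ^ (t + a) • v J ∈ P (μ + (t + a : ℕ) * 2 + (t + a : ℕ) * c)
        (ν + (t + a : ℕ) * 2 + (t + a : ℕ) * d) := fun r c d J hr hJ =>
    mem_piece_of_eq (hP (Rpiece_pow hr (t + a)) ((hv J).1 hJ)) (by push_cast; ring)
      (by push_cast; ring)
  have hs : (X 0 * X 1 : RR k) ∈ Rpiece k 2 0 := Rpiece_mul (X_mem_Rpiece 0) (X_mem_Rpiece 1)
  have ht : (X 2 * X 3 : RR k) ∈ Rpiece k 0 2 := Rpiece_mul (X_mem_Rpiece 2) (X_mem_Rpiece 3)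
  refine ⟨t + a + a, ![-((X 2 * X 3 : RR k) ^ (t + a) • v {2, 3}),
    (X 2 * X 3 : RR k) ^ (t + a) • v {0, 1}, (X 0 * X 1 : RR k) ^ (t + a) • v {1, 3},
    -((X 0 * X 1 : RR k) ^ (t + a) • v {0, 2})], fun i => ?_, ?_⟩
  · fin_cases i
    · exact neg_mem (mem_piece_of_eq (hmem _ _ _ _ ht (by decide))
        (by simp [stw]; ring) (by simp [stw]; ring))
    · exact mem_piece_of_eq (hmem _ _ _ _ ht (by decide))
        (by simp [stw]; ring) (by simp [stw]; ring)
    · exact mem_piece_of_eq (hmem _ _ _ _ hs (by decide))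
        (by simp [stw]; ring) (by simp [stw]; ring)
    · exact neg_mem (mem_piece_of_eq (hmem _ _ _ _ hs (by decide))
        (by simp [stw]; ring) (by simp [stw]; ring))
  · rw [Fin.sum_univ_four]
    simp only [prodX, Matrix.cons_val]
    linear_combination (norm := module) (-(X 1 * X 3 : RR k) ^ (t + a)) • e1 +
      ((X 0 * X 2 : RR k) ^ (t + a)) • e2

lemma LCvanish_of_fracVanish (hP : MulCompat P) {μ ν : ℤ} (h : FracVanish P μ ν) :
    LCvanish (B := k) (uR k) P 3 μ ν := by
  intro t w hw
  have hwm : ∀ J : Finset (Fin 4), J.card = 3 → w J ∈ P (μ + t * 3) (ν + t * 3) :=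
    fun J hJ => (hw.1 J).1 hJ
  have hcoc := congrFun (LinearMap.mem_ker.mp hw.2) Finset.univ
  rw [cechD_univ] at hcoc
  obtain ⟨b, y, hy, hxy⟩ := h (2 * t) (uR k 3 ^ t • w {0, 1, 2} - uR k 0 ^ t • w {1, 2, 3}) <|
    sub_mem
      (mem_piece_of_eq (hP (uR_pow_mem_Rpiece 3 t) (hwm {0, 1, 2} (by decide)))
        (by push_cast; ring) (by push_cast; ring))
      (mem_piece_of_eq (hP (uR_pow_mem_Rpiece 0 t) (hwm {1, 2, 3} (by decide)))
        (by push_cast; ring) (by push_cast; ring))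
  obtain ⟨T, hT⟩ : ∃ T, T = t + (b + t) := ⟨_, rfl⟩
  have hTb : 2 * t + b = T := by omega
  rw [hTb] at hy hxy
  have hyX : ∀ i j, stw i = stw j → (X i : RR k) ^ T • y j ∈ P (μ + T * 2) (ν + T * 2) :=
    fun i j hij => by
      refine mem_piece_of_eq (hP (X_pow_mem_Rpiece i T) (hy j)) ?_ ?_ <;> rw [hij] <;> ring
  have hwu : ∀ (i j : Fin 4) (J : Finset (Fin 4)), J.card = 3 →
      (uR k i ^ b * uR k j ^ (b + t)) • w J ∈ P (μ + T * 2) (ν + T * 2) := fun i j J hJ => by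
    refine mem_piece_of_eq (hP (Rpiece_mul (uR_pow_mem_Rpiece i b) (uR_pow_mem_Rpiece j (b + t)))
      (hwm J hJ)) ?_ ?_ <;> rw [hT] <;> push_cast <;> ring
  let v : Finset (Fin 4) → M :=
    Pi.single {0, 1} ((X 0 : RR k) ^ T • y 1) +
    Pi.single {0, 2} (-((X 2 : RR k) ^ T • y 3)) +
    Pi.single {0, 3} (-((X 0 : RR k) ^ T • y 0) - (X 3 : RR k) ^ T • y 3 -
      (uR k 2 ^ b * uR k 1 ^ (b + t)) • w {0, 2, 3}) +
    Pi.single {1, 2} ((X 0 : RR k) ^ T • y 0 + (X 2 : RR k) ^ T • y 2 +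
      (uR k 3 ^ b * uR k 0 ^ (b + t)) • w {1, 2, 3}) +
    Pi.single {1, 3} ((X 3 : RR k) ^ T • y 2) +
    Pi.single {2, 3} (-((X 1 : RR k) ^ T • y 0))
  have hv : v ∈ cechC P T 2 μ ν := by
    refine add_mem (add_mem (add_mem (add_mem (add_mem ?_ ?_) ?_) ?_) ?_) ?_ <;>
      refine single_mem_cechC (by decide) ?_
    · exact hyX 0 1 rfl
    · exact neg_mem (hyX 2 3 rfl)
    · exact sub_mem (sub_mem (neg_mem (hyX 0 0 rfl)) (hyX 3 3 rfl)) (hwu _ _ _ (by decide))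
    · exact add_mem (add_mem (hyX 0 0 rfl) (hyX 2 2 rfl)) (hwu _ _ _ (by decide))
    · exact hyX 3 2 rfl
    · exact neg_mem (hyX 1 0 rfl)
  rw [Fin.sum_univ_four] at hxy
  refine ⟨b + t, v, hT ▸ hv, ?_⟩
  rw [← hT]
  refine eq_of_mem_cechC_three (cechD_mem_cechC hP hv) (hT ▸ hP.trComp (b + t) t 3 μ ν w hw.1)
    ?_ ?_ ?_ ?_ <;>
    rw [cechD_triple _ _ (by decide) (by decide), cechTr_apply,
      prod_uR_triple (by decide) (by decide)] <;>
    simp +decide only [v, Pi.add_apply, Pi.single_apply, if_true, if_false, zero_add, add_zero,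
      prodX, uR_zero, uR_one, uR_two, uR_three, Pi.zero_apply] at hxy hcoc ⊢ <;> subst hT
  · linear_combination (norm := module) -((X 0 * X 2 : RR k) ^ (t + (b + t))) • hxy
  · linear_combination (norm := module) -((X 0 * X 3 : RR k) ^ (t + (b + t))) • hxy -
      ((X 0 * X 1 * X 2 * X 3 : RR k) ^ b * (X 0 * X 3 : RR k) ^ (t + (b + t))) • hcoc
  · module
  · module

end Symbols

section Koszul

variable {k : Type} [Field k] {f : Fin 4 → RR k} {m n : ℕ}

lemma mem_KP {p : ℕ} {μ ν : ℤ} {W : (Fin p → Fin 4) → RR k} :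
    W ∈ KP k m n p μ ν ↔ ∀ a, W a ∈ Rpiece k (μ - p * m) (ν - p * n) := by
  simp [KP, Submodule.mem_iInf]

variable (k m n) in
/-- The bidegree-`(μ,ν)` piece of the module of alternating `p`-tensors. -/
def KA (p : ℕ) (μ ν : ℤ) : Submodule k ((Fin p → Fin 4) → RR k) :=
  KP k m n p μ ν ⊓ (AltT k p).restrictScalars k

lemma mulCompat_KP (p : ℕ) : MulCompat (KP k m n p) := by
  intro a b c d r W hr hW
  rw [mem_KP] at hW ⊢
  exact fun i => mem_piece_of_eq (P := Rpiece k) (Rpiece_mul hr (hW i)) (by ring) (by ring)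

lemma mulCompat_KA (p : ℕ) : MulCompat (KA k m n p) := fun hr hW =>
  ⟨mulCompat_KP p hr hW.1, (AltT k p).smul_mem _ hW.2⟩

lemma mulCompat_PZ (p : ℕ) : MulCompat (PZ k f m n p) := fun hr hW => mulCompat_KP p hr hW

lemma ZK_le_AltT (p : ℕ) : ZK k f p ≤ AltT k p := by
  cases p with
  | zero => exact le_rfl
  | succ q => exact inf_le_left

lemma DK_mem_AltT {p : ℕ} {W : (Fin (p + 1) → Fin 4) → RR k} (hW : W ∈ AltT k (p + 1)) :
    DK k f p W ∈ AltT k p := by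
  intro a i j hij
  have hij' : i.succ ≠ j.succ := fun h => hij (Fin.succ_injective _ h)
  refine ⟨fun h => ?_, ?_⟩
  · change ∑ l, W (Fin.cons l a) * f l = 0
    refine Finset.sum_eq_zero fun l _ => ?_
    rw [(hW (Fin.cons l a) i.succ j.succ hij').1 (by simpa using h), zero_mul]
  · change ∑ l, W (Fin.cons l (a ∘ Equiv.swap i j)) * f l = -∑ l, W (Fin.cons l a) * f l
    rw [← Finset.sum_neg_distrib]
    refine Finset.sum_congr rfl fun l _ => ?_
    rw [← neg_mul, ← (hW (Fin.cons l a) i.succ j.succ hij').2]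
    congr 2
    funext x
    refine Fin.cases ?_ (fun x => ?_) x
    · rw [Function.comp_apply, Equiv.swap_apply_of_ne_of_ne (Fin.succ_ne_zero _).symm
        (Fin.succ_ne_zero _).symm, Fin.cons_zero, Fin.cons_zero]
    · rw [Function.comp_apply, (Fin.succ_injective p).swap_apply, Fin.cons_succ, Fin.cons_succ,
        Function.comp_apply]

lemma DK_DK {p : ℕ} {W : (Fin (p + 2) → Fin 4) → RR k} (hW : W ∈ AltT k (p + 2)) :
    DK k f p (DK k f (p + 1) W) = 0 := by
  funext a
  have h01 : (0 : Fin (p + 2)) ≠ 1 := by simp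
  have hdiag : ∀ i, W (Fin.cons i (Fin.cons i a)) = 0 := fun i =>
    (hW (Fin.cons i (Fin.cons i a)) 0 1 h01).1 rfl
  have hswap : ∀ i j, W (Fin.cons i (Fin.cons j a)) = -W (Fin.cons j (Fin.cons i a)) := by
    intro i j
    rw [← (hW (Fin.cons j (Fin.cons i a)) 0 1 h01).2]
    congr 1
    funext x
    refine Fin.cases ?_ (fun x => Fin.cases ?_ (fun x => ?_) x) x
    · rw [Function.comp_apply, Equiv.swap_apply_left]
      rfl
    · rw [Function.comp_apply, Fin.succ_zero_eq_one, Equiv.swap_apply_right]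
      rfl
    · have hx : (x.succ.succ : Fin (p + 2)) ≠ 1 := fun h =>
        Fin.succ_ne_zero x (Fin.succ_injective _ h)
      rw [Function.comp_apply, Equiv.swap_apply_of_ne_of_ne (Fin.succ_ne_zero _) hx]
      rfl
  change ∑ i, (∑ j, W (Fin.cons j (Fin.cons i a)) * f j) * f i = 0
  simp only [Fin.sum_univ_four, hdiag, hswap 1 0, hswap 2 0, hswap 3 0, hswap 2 1, hswap 3 1,
    hswap 3 2]
  ring

lemma DK_mem_ZK {p : ℕ} {W : (Fin (p + 1) → Fin 4) → RR k} (hW : W ∈ AltT k (p + 1)) :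
    DK k f p W ∈ ZK k f p := by
  cases p with
  | zero => exact DK_mem_AltT hW
  | succ q => exact ⟨DK_mem_AltT hW, DK_DK hW⟩

lemma mem_AltT_of_smul_mem {p : ℕ} {r : RR k} (hr : r ≠ 0) {W : (Fin p → Fin 4) → RR k}
    (hW : r • W ∈ AltT k p) : W ∈ AltT k p := by
  intro a i j hij
  obtain ⟨h1, h2⟩ := hW a i j hij
  simp only [Pi.smul_apply, smul_eq_mul, mul_eq_zero, hr, false_or] at h1 h2
  exact ⟨h1, mul_left_cancel₀ hr (by rw [h2, mul_neg])⟩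

lemma mem_ZK_of_smul_mem {p : ℕ} {r : RR k} (hr : r ≠ 0) {W : (Fin p → Fin 4) → RR k}
    (hW : r • W ∈ ZK k f p) : W ∈ ZK k f p := by
  cases p with
  | zero => exact mem_AltT_of_smul_mem hr hW
  | succ q =>
    refine ⟨mem_AltT_of_smul_mem hr hW.1, ?_⟩
    have h := LinearMap.mem_ker.mp hW.2
    rw [map_smul] at h
    exact (smul_eq_zero.mp h).resolve_left hr

lemma mem_KP_of_smul_mem {p : ℕ} {a b μ ν : ℤ} {r : RR k} (hr0 : r ≠ 0) (hr : r ∈ Rpiece k a b)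
    {W : (Fin p → Fin 4) → RR k} (hW : r • W ∈ KP k m n p (μ + a) (ν + b)) :
    W ∈ KP k m n p μ ν := by
  rw [mem_KP] at hW ⊢
  intro i
  have h : W i * r ∈ Rpiece k (μ + a - p * m) (ν + b - p * n) := by
    rw [mul_comm (W i)]; exact hW i
  exact mem_Rpiece_of_mul_mem (a := μ - p * m) (b := ν - p * n) hr0 hr
    (mem_piece_of_eq (P := Rpiece k) h (by ring) (by ring))

lemma DK_mem_KP (hf : ∀ i, f i ∈ Rpiece k m n) {p : ℕ} {μ ν : ℤ}
    {W : (Fin (p + 1) → Fin 4) → RR k} (hW : W ∈ KP k m n (p + 1) μ ν) :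
    DK k f p W ∈ KP k m n p μ ν := by
  rw [mem_KP] at hW ⊢
  exact fun a => sum_mem fun i _ => mem_piece_of_eq (P := Rpiece k) (Rpiece_mul (hW _) (hf i))
    (by push_cast; ring) (by push_cast; ring)

lemma exists_mem_KA_of_mem_BK (hf : ∀ i, f i ∈ Rpiece k m n) {p : ℕ} {μ ν : ℤ}
    {z : (Fin p → Fin 4) → RR k} (hz : z ∈ KP k m n p μ ν) (hB : z ∈ BK k f p) :
    ∃ y ∈ KA k m n (p + 1) μ ν, DK k f p y = z := by
  obtain ⟨W, hW, rfl⟩ := hB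
  rw [mem_KP] at hz
  refine ⟨fun a => Rproj k (μ - (p + 1 : ℕ) * m) (ν - (p + 1 : ℕ) * n) (W a),
    ⟨mem_KP.mpr fun a => Rproj_mem _ _ _, fun a i j hij => ⟨fun h => ?_, ?_⟩⟩, ?_⟩
  · change Rproj k _ _ (W a) = 0
    rw [(hW a i j hij).1 h, map_zero]
  · change Rproj k _ _ (W (a ∘ Equiv.swap i j)) = -Rproj k _ _ (W a)
    rw [(hW a i j hij).2, map_neg]
  · funext a
    rw [← Rproj_eq_self (hz a)]
    change ∑ i, Rproj k _ _ (W (Fin.cons i a)) * f i = Rproj k _ _ (∑ i, W (Fin.cons i a) * f i)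
    rw [map_sum]
    refine Finset.sum_congr rfl fun i _ => ?_
    rw [← Rproj_mul (hf i)]
    congr 2 <;> push_cast <;> ring

/-- Each `f i` annihilates the Koszul homology module `H_p`, for `p = 1, 2`. -/
lemma exists_DK_eq_smul {p : ℕ} (hp : p = 1 ∨ p = 2) {μ ν : ℤ} {x : (Fin p → Fin 4) → RR k}
    (hx : x ∈ ZK k f p) (hxd : x ∈ KP k m n p μ ν) (l : Fin 4) :
    ∃ y ∈ KA k m n (p + 1) (μ + m) (ν + n), DK k f p y = f l • x := by
  rw [mem_KP] at hxd
  have hite : ∀ (c : Prop) [Decidable c] (b : Fin p → Fin 4), (if c then x b else 0) ∈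
      Rpiece k (μ + m - (p + 1 : ℕ) * m) (ν + n - (p + 1 : ℕ) * n) := by
    intro c _ b
    split_ifs
    · exact mem_piece_of_eq (P := Rpiece k) (hxd b) (by push_cast; ring) (by push_cast; ring)
    · exact zero_mem _
  rcases hp with rfl | rfl
  · refine ⟨fun a => (if a 0 = l then x ![a 1] else 0) - (if a 1 = l then x ![a 0] else 0),
      ⟨mem_KP.mpr fun a => sub_mem (hite _ _) (hite _ _), fun a i j hij => ?_⟩, ?_⟩
    · fin_cases i <;> fin_cases j <;> first | exact absurd rfl hij | skip
      all_goals
        refine ⟨fun h => ?_, ?_⟩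
        · simp at h
          simp [h]
        · simp
    · funext b
      have hD : ∑ i, x ![i] * f i = 0 := by
        have h := congrFun (LinearMap.mem_ker.mp hx.2) ![]
        exact h
      obtain ⟨b, rfl⟩ : ∃ b0, b = ![b0] := ⟨b 0, by funext i; fin_cases i; rfl⟩
      change ∑ i, ((if i = l then x ![b] else 0) - (if b = l then x ![i] else 0)) * f i
        = f l * x ![b]
      simp only [sub_mul, Finset.sum_sub_distrib, ite_mul, zero_mul, Finset.sum_ite_eq',
        Finset.mem_univ, if_true]
      by_cases hb : b = l <;> simp [hb, hD, mul_comm (f l)]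
  · have hdiag : ∀ i, x ![i, i] = 0 := fun i => (hx.1 ![i, i] 0 1 (by decide)).1 rfl
    have hswap : ∀ i j, x ![i, j] = -x ![j, i] := by
      intro i j
      rw [← (hx.1 ![j, i] 0 1 (by decide)).2]
      congr 1
      funext t
      fin_cases t <;> rfl
    refine ⟨fun a => (if a 0 = l then x ![a 1, a 2] else 0) - (if a 1 = l then x ![a 0, a 2] else 0)
        + (if a 2 = l then x ![a 0, a 1] else 0),
      ⟨mem_KP.mpr fun a => add_mem (sub_mem (hite _ _) (hite _ _)) (hite _ _),
        fun a i j hij => ?_⟩, ?_⟩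
    · fin_cases i <;> fin_cases j <;> first | exact absurd rfl hij | skip
      all_goals
        refine ⟨fun h => ?_, ?_⟩
        · simp only [Fin.zero_eta, Fin.mk_one, Fin.reduceFinMk] at h
          simp only [h, hdiag]
          grind
        · simp only [Fin.zero_eta, Fin.mk_one, Fin.reduceFinMk, Function.comp_apply,
            Equiv.swap_apply_def]
          have h10 := hswap (a 1) (a 0)
          have h20 := hswap (a 2) (a 0)
          have h21 := hswap (a 2) (a 1)
          simp
          grind
    · funext b
      have hD : ∀ j, ∑ i, x ![i, j] * f i = 0 := fun j =>
        congrFun (LinearMap.mem_ker.mp hx.2) ![j]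
      obtain ⟨b, c, rfl⟩ : ∃ b0 b1, b = ![b0, b1] :=
        ⟨b 0, b 1, by funext i; fin_cases i <;> rfl⟩
      change ∑ i, ((if i = l then x ![b, c] else 0) - (if b = l then x ![i, c] else 0)
        + (if c = l then x ![i, b] else 0)) * f i = f l * x ![b, c]
      simp only [sub_mul, add_mul, Finset.sum_add_distrib, Finset.sum_sub_distrib, ite_mul,
        zero_mul, Finset.sum_ite_eq', Finset.mem_univ, if_true]
      by_cases hb : b = l <;> by_cases hc : c = l <;> simp [hb, hc, hD, mul_comm (f l), hdiag]

end Koszul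

section CechMap

variable {k : Type} [Field k]
variable {M N : Type} [AddCommGroup M] [Module k M] [Module (RR k) M]
  [AddCommGroup N] [Module k N] [Module (RR k) N]

lemma cechC_map {P : ℤ → ℤ → Submodule k M} {Q : ℤ → ℤ → Submodule k N} (φ : M →ₗ[RR k] N)
    (hφ : ∀ a b x, x ∈ P a b → φ x ∈ Q a b) {t i : ℕ} {μ ν : ℤ} {w : Finset (Fin 4) → M}
    (hw : w ∈ cechC P t i μ ν) : (fun J => φ (w J)) ∈ cechC Q t i μ ν := fun J =>
  ⟨fun h => hφ _ _ _ ((hw J).1 h), fun h => by simp only [(hw J).2 h, map_zero]⟩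

variable [IsScalarTower k (RR k) M] [IsScalarTower k (RR k) N]

lemma cechD_map (φ : M →ₗ[RR k] N) (t : ℕ) (w : Finset (Fin 4) → M) (J : Finset (Fin 4)) :
    cechD (B := k) (uR k) t (fun J => φ (w J)) J = φ (cechD (B := k) (uR k) t w J) := by
  simp only [cechD_apply, map_sum, map_smul]

lemma cechTr_map (φ : M →ₗ[RR k] N) (a : ℕ) (w : Finset (Fin 4) → M) :
    cechTr (B := k) (uR k) a (fun J => φ (w J)) =
      fun J => φ (cechTr (B := k) (uR k) a w J) := by
  funext J
  simp only [cechTr_apply, map_smul]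

lemma cocyc_map {P : ℤ → ℤ → Submodule k M} {Q : ℤ → ℤ → Submodule k N} (φ : M →ₗ[RR k] N)
    (hφ : ∀ a b x, x ∈ P a b → φ x ∈ Q a b) {t i : ℕ} {μ ν : ℤ} {w : Finset (Fin 4) → M}
    (hw : w ∈ cocyc (uR k) P t i μ ν) : (fun J => φ (w J)) ∈ cocyc (uR k) Q t i μ ν := by
  refine ⟨cechC_map φ hφ hw.1, ?_⟩
  change cechD (B := k) (uR k) t (fun J => φ (w J)) = 0
  funext J
  rw [cechD_map, LinearMap.mem_ker.mp hw.2, Pi.zero_apply, map_zero, Pi.zero_apply]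

lemma cobd_succ_map {P : ℤ → ℤ → Submodule k M} {Q : ℤ → ℤ → Submodule k N} (φ : M →ₗ[RR k] N)
    (hφ : ∀ a b x, x ∈ P a b → φ x ∈ Q a b) {t i : ℕ} {μ ν : ℤ} {w : Finset (Fin 4) → M}
    (hw : w ∈ cobd (uR k) P t (i + 1) μ ν) :
    (fun J => φ (w J)) ∈ cobd (uR k) Q t (i + 1) μ ν := by
  obtain ⟨v, hv, rfl⟩ := hw
  exact ⟨_, cechC_map φ hφ hv, funext fun J => cechD_map φ t v J⟩

/-- The cochain differential has a linear section over the coboundaries. -/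
lemma exists_cobd_section (P : ℤ → ℤ → Submodule k M) (t i : ℕ) (μ ν : ℤ) :
    ∃ g : (Finset (Fin 4) → M) →ₗ[k] (Finset (Fin 4) → M),
      ∀ w ∈ cobd (uR k) P t (i + 1) μ ν,
        g w ∈ cechC P t i μ ν ∧ cechD (B := k) (uR k) t (g w) = w := by
  let d := ((cechD (B := k) (uR k) t).domRestrict (cechC P t i μ ν)).rangeRestrict
  obtain ⟨g, hg⟩ := LinearMap.exists_rightInverse_of_surjective d
    (LinearMap.range_rangeRestrict _)
  obtain ⟨g', hg'⟩ := LinearMap.exists_extend g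
  refine ⟨(cechC P t i μ ν).subtype ∘ₗ g', ?_⟩
  rintro w ⟨v, hv, rfl⟩
  refine ⟨(g' _).2, ?_⟩
  have h1 : g' (cechD (B := k) (uR k) t v) = g (d ⟨v, hv⟩) :=
    LinearMap.congr_fun hg' (d ⟨v, hv⟩)
  change cechD (B := k) (uR k) t (g' (cechD (B := k) (uR k) t v) : Finset (Fin 4) → M) = _
  rw [h1]
  exact congrArg Subtype.val (LinearMap.congr_fun hg (d ⟨v, hv⟩))

end CechMap

section Koszul

variable {k : Type} [Field k] {m n : ℕ}

/-- Vanishing of local cohomology of the module of all `p`-tensors implies vanishing for the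
alternating ones. -/
lemma LCvanish_KA {p i : ℕ} {μ ν : ℤ} (h : LCvanish (B := k) (uR k) (KP k m n p) (i + 1) μ ν) :
    LCvanish (B := k) (uR k) (KA k m n p) (i + 1) μ ν := by
  let Q : ℤ → ℤ → Submodule k (RR k) := fun a b => Rpiece k (a - p * m) (b - p * n)
  let π : (Fin p → Fin 4) → ((Fin p → Fin 4) → RR k) →ₗ[RR k] RR k := fun a => LinearMap.proj a
  have hQ : MulCompat Q := fun hr hx =>
    mem_piece_of_eq (P := Rpiece k) (Rpiece_mul hr hx) (by ring) (by ring)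
  have hπ : ∀ e a b x, x ∈ KP k m n p a b → π e x ∈ Q a b := fun e _ _ _ hx => mem_KP.mp hx e
  have hvan : LCvanish (B := k) (uR k) Q (i + 1) μ ν := by
    intro t r hr
    obtain ⟨a, ha⟩ := h t _ (cocyc_map (Q := KP k m n p) (LinearMap.pi fun _ => LinearMap.id)
      (fun a b x hx => mem_KP.mpr fun _ => hx) hr)
    refine ⟨a, ?_⟩
    have := cobd_succ_map (π fun _ => 0) (hπ _) ha
    rwa [← cechTr_map] at this
  intro t w hw
  have hA : ∀ e a b x, x ∈ KA k m n p a b → π e x ∈ Q a b := fun e a b x hx => hπ e a b x hx.1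
  choose c hc using fun e => hvan t _ (cocyc_map (π e) (hA e) hw)
  refine ⟨∑ e, c e, ?_⟩
  obtain ⟨g, hg⟩ := exists_cobd_section Q (t + ∑ e, c e) i μ ν
  set W := cechTr (B := k) (uR k) (∑ e, c e) w with hWdef
  have hW : ∀ e, (fun J => W J e) ∈ cobd (uR k) Q (t + ∑ e, c e) (i + 1) μ ν := by
    intro e
    have hle : c e ≤ ∑ e, c e := Finset.single_le_sum (fun _ _ => Nat.zero_le _) (Finset.mem_univ e)
    have h1 := tr_cobd (uR k) Q hQ.trComp (a := ∑ e, c e - c e) (hc e)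
    rwa [cechTr_cechTr, Nat.add_sub_cancel' hle, add_assoc, Nat.add_sub_cancel' hle,
      cechTr_map] at h1
  have hWA : ∀ J, W J ∈ AltT k p := by
    intro J
    refine (AltT k p).smul_mem _ ?_
    by_cases hJ : J.card = i + 1
    · exact ((hw.1 J).1 hJ).2
    · rw [(hw.1 J).2 hJ]
      exact zero_mem _
  let v : Finset (Fin 4) → (Fin p → Fin 4) → RR k := fun J e => g (fun J => W J e) J
  refine ⟨v, fun J => ⟨fun hJ => ⟨?_, ?_⟩, fun hJ => ?_⟩, ?_⟩
  · exact mem_KP.mpr fun e => ((hg _ (hW e)).1 J).1 hJ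
  · intro e i j hij
    refine ⟨fun he => ?_, ?_⟩
    · have h0 : (fun J => W J e) = 0 := funext fun J => (hWA J e i j hij).1 he
      change g (fun J => W J e) J = 0
      rw [h0, map_zero, Pi.zero_apply]
    · have h0 : (fun J => W J (e ∘ Equiv.swap i j)) = -(fun J => W J e) :=
        funext fun J => (hWA J e i j hij).2
      change g (fun J => W J (e ∘ Equiv.swap i j)) J = -g (fun J => W J e) J
      rw [h0, map_neg, Pi.neg_apply]
  · exact funext fun e => ((hg _ (hW e)).1 J).2 hJ
  · funext J e
    have h1 := congrFun (hg _ (hW e)).2 J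
    rw [← h1]
    exact (cechD_map (π e) _ v J).symm

end Koszul

section TopCohomology

variable {k : Type} [Field k] {f : Fin 4 → RR k} {m n : ℕ}

/-- A bihomogeneous version of `exists_prodX_pow_eq`. -/
lemma exists_prodX_pow_eq_of_mem_Rpiece {g : RR k} {c d : ℤ} (hg0 : g ≠ 0) (hg : g ∈ Rpiece k c d)
    (N : ℕ) : ∃ (a : ℕ) (q : RR k) (h : Fin 4 → RR k), q ∈ Rpiece k (2 * a - c) (2 * a - d) ∧
      (∀ i, h i ∈ Rpiece k (2 * a - (N + a : ℕ) * (stw i).1) (2 * a - (N + a : ℕ) * (stw i).2)) ∧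
      prodX ^ a = q * g + ∑ i, h i * X i ^ (N + a) := by
  obtain ⟨a, q, h, e⟩ := exists_prodX_pow_eq hg0 N
  refine ⟨a, Rproj k _ _ q, fun i => Rproj k _ _ (h i), Rproj_mem _ _ _,
    fun i => Rproj_mem _ _ _, ?_⟩
  have hpi : (prodX : RR k) ^ a ∈ Rpiece k (2 * a) (2 * a) :=
    mem_piece_of_eq (P := Rpiece k) (Rpiece_pow prodX_mem_Rpiece a) (by ring) (by ring)
  rw [← Rproj_eq_self hpi, e, map_add, map_sum, ← Rproj_mul hg]
  congr 1
  · congr 2 <;> ring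
  · refine Finset.sum_congr rfl fun i _ => ?_
    rw [← Rproj_mul (X_pow_mem_Rpiece i _)]
    congr 2 <;> ring

lemma exists_mul_X_eq_prodX (i : Fin 4) :
    ∃ r : RR k, r ∈ Rpiece k (2 - (stw i).1) (2 - (stw i).2) ∧ r * X i = prodX := by
  have h : (∏ j ∈ Finset.univ.erase i, X j) * X i = (prodX : RR k) := by
    rw [Finset.prod_erase_mul _ _ (Finset.mem_univ i), Fin.prod_univ_four, prodX]
  refine ⟨_, mem_Rpiece_of_mul_mem (X_ne_zero i) (X_mem_Rpiece i) ?_, h⟩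
  rw [h]
  exact mem_piece_of_eq (P := Rpiece k) prodX_mem_Rpiece (by ring) (by ring)

lemma fracVanish_PZ (hf : ∀ i, f i ∈ Rpiece k m n) (hf0 : f 0 ≠ 0) {p : ℕ} (hp : p = 1 ∨ p = 2)
    {μ ν : ℤ} (h : FracVanish (KA k m n (p + 1)) μ ν) : FracVanish (PZ k f m n p) μ ν := by
  intro N x hx
  obtain ⟨a, q, c, hq, hc, e⟩ := exists_prodX_pow_eq_of_mem_Rpiece hf0 (hf 0) N
  have hqx : (q • x : ZK k f p) ∈ PZ k f m n p (2 * a - m + (μ + 2 * N)) (2 * a - n + (ν + 2 * N)) :=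
    mulCompat_PZ p hq hx
  obtain ⟨y, hy, hDy⟩ := exists_DK_eq_smul hp (q • x : ZK k f p).2 hqx 0
  obtain ⟨b, z, hz, ez⟩ := h (N + a) y
    (mem_piece_of_eq hy (by push_cast; ring) (by push_cast; ring))
  choose r hr er using exists_mul_X_eq_prodX (k := k)
  have hZ : ∀ i, DK k f p (z i) ∈ ZK k f p := fun i => DK_mem_ZK (hz i).2
  refine ⟨a + b, fun i => ⟨DK k f p (z i), hZ i⟩ + (r i ^ b * c i) • x,
    fun i => add_mem ?_ ?_, ?_⟩
  · exact mem_piece_of_eq (P := KP k m n p) (DK_mem_KP hf (hz i).1) (by push_cast; ring)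
      (by push_cast; ring)
  · exact mem_piece_of_eq (mulCompat_PZ p (Rpiece_mul (Rpiece_pow (hr i) b) (hc i)) hx)
      (by push_cast; ring) (by push_cast; ring)
  · apply Subtype.ext
    have hD : (prodX : RR k) ^ b • f 0 • (q • x : ZK k f p).1 =
        ∑ i, (X i : RR k) ^ (N + a + b) • DK k f p (z i) := by
      rw [← hDy, ← map_smul, ez, map_sum]
      simp only [map_smul]
    have hX : ∀ i, (X i : RR k) ^ (N + a + b) * (r i ^ b * c i)
        = prodX ^ b * (c i * X i ^ (N + a)) := by
      intro i
      rw [← er i, mul_pow, pow_add]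
      ring
    simp only [smul_add, smul_smul, Finset.sum_add_distrib, ← add_assoc, hX]
    rw [← Finset.sum_smul, ← Finset.mul_sum]
    simp only [Submodule.coe_add, Submodule.coe_sum, Submodule.coe_smul]
    rw [← hD, pow_add, mul_comm (prodX ^ a), e]
    simp only [Submodule.coe_smul, smul_smul, mul_add, add_smul]
    congr 2
    ring

lemma LCvanish_PZ_three (hf : ∀ i, f i ∈ Rpiece k m n) (hf0 : f 0 ≠ 0) {p : ℕ}
    (hp : p = 1 ∨ p = 2) {μ ν : ℤ} (h : LCvanish (B := k) (uR k) (KP k m n (p + 1)) 3 μ ν) :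
    LCvanish (B := k) (uR k) (PZ k f m n p) 3 μ ν := by
  have h1 : LCvanish (B := k) (uR k) (KA k m n (p + 1)) 3 μ ν := LCvanish_KA (i := 2) h
  have h2 := fracVanish_of_LCvanish (P := KA k m n (p + 1)) (mulCompat_KA (p + 1)) h1
  exact LCvanish_of_fracVanish (P := PZ k f m n p) (mulCompat_PZ p) (fracVanish_PZ hf hf0 hp h2)

end TopCohomology

section LocalCohomologyClass

variable {k : Type} [Field k]
variable {M : Type} [AddCommGroup M] [Module k M] [Module (RR k) M] [IsScalarTower k (RR k) M]

/-- The cohomology class of a cocycle at level `t`. -/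
def cohMk (P : ℤ → ℤ → Submodule k M) (t i : ℕ) (μ ν : ℤ) :
    cocyc (uR k) P t i μ ν →ₗ[k] cohPiece (uR k) P t i μ ν :=
  (Submodule.comap (cocyc (uR k) P t i μ ν).subtype (cobd (uR k) P t i μ ν)).mkQ

variable {P : ℤ → ℤ → Submodule k M} {t i : ℕ} {μ ν : ℤ}

lemma cohMk_surjective : Function.Surjective (cohMk P t i μ ν) :=
  Submodule.mkQ_surjective _

lemma cohMk_eq_zero_iff (w : cocyc (uR k) P t i μ ν) :
    cohMk P t i μ ν w = 0 ↔ w.1 ∈ cobd (uR k) P t i μ ν :=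
  Submodule.Quotient.mk_eq_zero _

variable (hc : TrComp (uR k) P)

lemma cohTrans_cohMk {t t' : ℕ} (h : t ≤ t') (w : cocyc (uR k) P t i μ ν)
    (w' : cocyc (uR k) P t' i μ ν) (hw : w'.1 = cechTr (B := k) (uR k) (t' - t) w.1) :
    cohTrans (uR k) P hc i μ ν h (cohMk P t i μ ν w) = cohMk P t' i μ ν w' := by
  refine (Submodule.mapQ_apply _ _ _ _).trans ?_
  rw [show w' = ⟨_, _⟩ from Subtype.ext hw]
  rfl

instance : DirectedSystem (fun t => cohPiece (uR k) P t i μ ν)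
    (fun _ _ h => cohTrans (uR k) P hc i μ ν h) where
  map_self t x := by
    obtain ⟨w, rfl⟩ := cohMk_surjective x
    exact cohTrans_cohMk hc le_rfl w w (by rw [Nat.sub_self, cechTr_zero])
  map_map t₁ t₂ t₃ h₁₂ h₂₃ x := by
    obtain ⟨w, rfl⟩ := cohMk_surjective x
    have hm : ∀ {t t' : ℕ}, t ≤ t' → ∀ w ∈ cocyc (uR k) P t i μ ν,
        cechTr (B := k) (uR k) (t' - t) w ∈ cocyc (uR k) P t' i μ ν := by
      intro t t' h w hw
      have := tr_cocyc (uR k) P hc (a := t' - t) hw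
      rwa [Nat.add_sub_cancel' h] at this
    rw [cohTrans_cohMk hc h₁₂ w ⟨_, hm h₁₂ _ w.2⟩ rfl,
      cohTrans_cohMk hc h₂₃ ⟨_, hm h₁₂ _ w.2⟩ ⟨_, hm h₂₃ _ (hm h₁₂ _ w.2)⟩ rfl,
      cohTrans_cohMk hc (h₁₂.trans h₂₃) w ⟨_, hm h₂₃ _ (hm h₁₂ _ w.2)⟩ ?_]
    refine (cechTr_cechTr _ _ _).trans ?_
    congr 1
    congr 1
    omega

/-- The canonical map from the level-`t` cohomology to local cohomology. -/
def LCof (t i : ℕ) (μ ν : ℤ) : cohPiece (uR k) P t i μ ν →ₗ[k] LCH (uR k) P hc i μ ν :=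
  Module.DirectLimit.of k ℕ (fun t => cohPiece (uR k) P t i μ ν)
    (fun _ _ h => cohTrans (uR k) P hc i μ ν h) t

/-- The local cohomology class of a cocycle. -/
def LCclass (t i : ℕ) (μ ν : ℤ) : cocyc (uR k) P t i μ ν →ₗ[k] LCH (uR k) P hc i μ ν :=
  LCof hc t i μ ν ∘ₗ cohMk P t i μ ν

lemma exists_LCclass_eq (c : LCH (uR k) P hc i μ ν) : ∃ t w, LCclass hc t i μ ν w = c := by
  obtain ⟨t, x, hx⟩ := Module.DirectLimit.exists_of (G := fun t => cohPiece (uR k) P t i μ ν) c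
  obtain ⟨w, rfl⟩ := cohMk_surjective x
  exact ⟨t, w, hx⟩

lemma LCclass_cechTr {a : ℕ} (w : cocyc (uR k) P t i μ ν) (w' : cocyc (uR k) P (t + a) i μ ν)
    (hw : w'.1 = cechTr (B := k) (uR k) a w.1) :
    LCclass hc (t + a) i μ ν w' = LCclass hc t i μ ν w := by
  have h := cohTrans_cohMk hc (Nat.le_add_right t a) w w' (by rw [Nat.add_sub_cancel_left, hw])
  rw [LCclass, LinearMap.comp_apply, ← h]
  exact Module.DirectLimit.of_f

lemma LCclass_eq_zero_iff (w : cocyc (uR k) P t i μ ν) :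
    LCclass hc t i μ ν w = 0 ↔
      ∃ a, cechTr (B := k) (uR k) a w.1 ∈ cobd (uR k) P (t + a) i μ ν := by
  constructor
  · intro h
    obtain ⟨t', ht, h0⟩ := Module.DirectLimit.of.zero_exact
      (G := fun t => cohPiece (uR k) P t i μ ν) h
    obtain ⟨a, rfl⟩ := Nat.exists_eq_add_of_le ht
    rw [cohTrans_cohMk hc ht w ⟨_, tr_cocyc (uR k) P hc (a := a) w.2⟩
        (by rw [Nat.add_sub_cancel_left]), cohMk_eq_zero_iff] at h0
    exact ⟨a, h0⟩
  · rintro ⟨a, ha⟩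
    rw [← LCclass_cechTr hc w ⟨_, tr_cocyc (uR k) P hc (a := a) w.2⟩ rfl, LCclass,
      LinearMap.comp_apply, (cohMk_eq_zero_iff _).mpr ha, map_zero]

end LocalCohomologyClass

section Graph

variable {k A B : Type} [Field k] [AddCommGroup A] [Module k A] [AddCommGroup B] [Module k B]

/-- A submodule of `A × B` that projects bijectively onto both factors is the graph of a linear
equivalence. -/
lemma nonempty_linearEquiv_of_graph (G : Submodule k (A × B)) (h₁ : ∀ a, ∃ b, (a, b) ∈ G)
    (h₂ : ∀ b, ∃ a, (a, b) ∈ G) (h₃ : ∀ a, (a, (0 : B)) ∈ G → a = 0)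
    (h₄ : ∀ b, ((0 : A), b) ∈ G → b = 0) : Nonempty (B ≃ₗ[k] A) := by
  have e₁ : Function.Bijective (LinearMap.fst k A B ∘ₗ G.subtype) := by
    refine ⟨(injective_iff_map_eq_zero _).mpr ?_, fun a => ?_⟩
    · rintro ⟨⟨a, b⟩, h⟩ (rfl : a = 0)
      exact Subtype.ext (Prod.ext rfl (h₄ b h))
    · obtain ⟨b, h⟩ := h₁ a
      exact ⟨⟨_, h⟩, rfl⟩
  have e₂ : Function.Bijective (LinearMap.snd k A B ∘ₗ G.subtype) := by
    refine ⟨(injective_iff_map_eq_zero _).mpr ?_, fun b => ?_⟩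
    · rintro ⟨⟨a, b⟩, h⟩ (rfl : b = 0)
      exact Subtype.ext (Prod.ext (h₃ a h) rfl)
    · obtain ⟨a, h⟩ := h₂ b
      exact ⟨⟨_, h⟩, rfl⟩
  exact ⟨(LinearEquiv.ofBijective _ e₂).symm.trans (LinearEquiv.ofBijective _ e₁)⟩

end Graph

section FirstCohomology

variable {k : Type} [Field k] {p : ℕ}

lemma uR_pow_ne_zero (i : Fin 4) (t : ℕ) : uR k i ^ t ≠ 0 :=
  pow_ne_zero _ (mul_ne_zero (X_ne_zero _) (X_ne_zero _))

lemma isRelPrime_X {i j : Fin 4} (hij : i ≠ j) : IsRelPrime (X i : RR k) (X j) := by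
  rw [(X_prime (R := k) (i := i)).irreducible.isRelPrime_iff_not_dvd]
  simpa using hij

lemma isRelPrime_uR_zero_three (t : ℕ) : IsRelPrime (uR k 0 ^ t) (uR k 3 ^ t) := by
  rw [uR_zero, uR_three]
  exact IsRelPrime.pow (IsRelPrime.mul_left
    (IsRelPrime.mul_right (isRelPrime_X (by decide)) (isRelPrime_X (by decide)))
    (IsRelPrime.mul_right (isRelPrime_X (by decide)) (isRelPrime_X (by decide))))

/-- `H¹_𝔪` of a free module vanishes. -/
lemma exists_eq_smul_of_cechD_eq_zero {t : ℕ} {w : Finset (Fin 4) → (Fin p → Fin 4) → RR k}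
    (h : cechD (B := k) (uR k) t w = 0) : ∃ z, ∀ i, w {i} = uR k i ^ t • z := by
  have hpair : ∀ i j : Fin 4, i < j → uR k i ^ t • w {j} = uR k j ^ t • w {i} := by
    intro i j hij
    rw [← sub_eq_zero, ← cechD_pair t w hij, h, Pi.zero_apply]
  have hdvd : ∀ e, uR k 0 ^ t ∣ w {0} e := fun e =>
    (isRelPrime_uR_zero_three t).dvd_of_dvd_mul_left
      ⟨w {3} e, (congrFun (hpair 0 3 (by decide)) e).symm⟩
  choose z hz using hdvd
  have h0 : w {0} = uR k 0 ^ t • z := funext hz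
  refine ⟨z, fun i => ?_⟩
  rcases eq_or_ne i 0 with rfl | hi
  · exact h0
  · refine smul_right_injective _ (uR_pow_ne_zero (k := k) 0 t) ?_
    change uR k 0 ^ t • w {i} = uR k 0 ^ t • uR k i ^ t • z
    rw [hpair 0 i (Fin.pos_of_ne_zero hi), h0, smul_comm]

end FirstCohomology

section Homology

variable {k : Type} [Field k] {f : Fin 4 → RR k} {m n q : ℕ} {μ ν : ℤ}

variable (k f q) in
/-- The class of a Koszul cycle in Koszul homology. -/
def HKmk : ZK k f q →ₗ[RR k] HK k f q :=
  (Submodule.comap (ZK k f q).subtype (BK k f q)).mkQ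

lemma HKmk_eq_zero_iff (z : ZK k f q) : HKmk k f q z = 0 ↔ z.1 ∈ BK k f q :=
  Submodule.Quotient.mk_eq_zero _

lemma HKmk_smul (c : k) (z : ZK k f q) : HKmk k f q (c • z) = c • HKmk k f q z := rfl

lemma mem_TorPH {x : HK k f q} : x ∈ TorPH k f m n q μ ν ↔
    (∃ z ∈ PZ k f m n q μ ν, HKmk k f q z = x) ∧ ∃ t : ℕ, ∀ i, uR k i ^ t • x = 0 := Iff.rfl

end Homology

section Connecting

variable {k : Type} [Field k] {m n q : ℕ} {μ ν : ℤ}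

lemma cechC_ext_of_card_one {M : Type} [AddCommGroup M] [Module k M] {P : ℤ → ℤ → Submodule k M}
    {t : ℕ} {w w' : Finset (Fin 4) → M} (hw : w ∈ cechC P t 1 μ ν) (hw' : w' ∈ cechC P t 1 μ ν)
    (h : ∀ i, w {i} = w' {i}) : w = w' := by
  funext J
  by_cases hJ : J.card = 1
  · obtain ⟨i, rfl⟩ := Finset.card_eq_one.mp hJ
    exact h i
  · rw [(hw J).2 hJ, (hw' J).2 hJ]

lemma mem_AltT_of_mem_cechC {t i : ℕ} {y : Finset (Fin 4) → (Fin q → Fin 4) → RR k}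
    (hy : y ∈ cechC (KA k m n q) t i μ ν) (J : Finset (Fin 4)) : y J ∈ AltT k q := by
  by_cases hJ : J.card = i
  · exact ((hy J).1 hJ).2
  · rw [(hy J).2 hJ]
    exact zero_mem _

variable (f : Fin 4 → RR k)

/-- The cocycle `w` of `Z_{q+1}` represents the image of the class of the cycle `z` under the
connecting homomorphism `H⁰_𝔪(H_q) → H²_𝔪(Z_{q+1})`, as witnessed by the cochain `y` of
`K_{q+1}`. -/
structure IsConnecting (m n q : ℕ) (μ ν : ℤ) (t : ℕ) (z : ZK k f q)
    (y : Finset (Fin 4) → (Fin (q + 1) → Fin 4) → RR k)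
    (w : cocyc (uR k) (PZ k f m n (q + 1)) t 2 μ ν) : Prop where
  mem_PZ : z ∈ PZ k f m n q μ ν
  mem_cechC : y ∈ cechC (KA k m n (q + 1)) t 1 μ ν
  DK_eq : ∀ i, DK k f q (y {i}) = uR k i ^ t • z.1
  coe_eq : ∀ J, (w.1 J).1 = cechD (B := k) (uR k) t y J

variable {f} {t : ℕ} {z z' : ZK k f q} {y y' : Finset (Fin 4) → (Fin (q + 1) → Fin 4) → RR k}
  {w w' : cocyc (uR k) (PZ k f m n (q + 1)) t 2 μ ν}

lemma IsConnecting.add (h : IsConnecting f m n q μ ν t z y w)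
    (h' : IsConnecting f m n q μ ν t z' y' w') :
    IsConnecting f m n q μ ν t (z + z') (y + y') (w + w') where
  mem_PZ := add_mem h.mem_PZ h'.mem_PZ
  mem_cechC := add_mem h.mem_cechC h'.mem_cechC
  DK_eq i := by
    rw [Pi.add_apply, map_add, h.DK_eq, h'.DK_eq, ← smul_add]
    rfl
  coe_eq J := by
    rw [map_add, Pi.add_apply, ← h.coe_eq, ← h'.coe_eq]
    rfl

lemma IsConnecting.smul (c : k) (h : IsConnecting f m n q μ ν t z y w) :
    IsConnecting f m n q μ ν t (c • z) (c • y) (c • w) where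
  mem_PZ := Submodule.smul_mem _ c h.mem_PZ
  mem_cechC := Submodule.smul_mem _ c h.mem_cechC
  DK_eq i := by
    rw [Pi.smul_apply, LinearMap.map_smul_of_tower, h.DK_eq, smul_comm]
    rfl
  coe_eq J := by
    rw [map_smul, Pi.smul_apply, ← h.coe_eq]
    rfl

lemma isConnecting_zero : IsConnecting f m n q μ ν t 0 0 0 where
  mem_PZ := zero_mem _
  mem_cechC := zero_mem _
  DK_eq i := by rw [Pi.zero_apply, map_zero]; exact (smul_zero _).symm
  coe_eq J := by rw [map_zero]; rfl

lemma IsConnecting.cechTr (h : IsConnecting f m n q μ ν t z y w) (a : ℕ)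
    (w' : cocyc (uR k) (PZ k f m n (q + 1)) (t + a) 2 μ ν)
    (hw : w'.1 = cechTr (B := k) (uR k) a w.1) :
    IsConnecting f m n q μ ν (t + a) z (cechTr (B := k) (uR k) a y) w' where
  mem_PZ := h.mem_PZ
  mem_cechC := MulCompat.trComp (P := KA k m n (q + 1)) (mulCompat_KA (q + 1)) _ _ _ _ _ _
    h.mem_cechC
  DK_eq i := by
    rw [cechTr_apply, map_smul, h.DK_eq, Finset.prod_singleton, smul_smul, ← pow_add, add_comm]
  coe_eq J := by
    rw [hw, ← cechTr_cechD, cechTr_apply, cechTr_apply, ← h.coe_eq]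
    rfl

lemma exists_isConnecting (hf : ∀ i, f i ∈ Rpiece k m n) (hz : z ∈ PZ k f m n q μ ν)
    (hy : y ∈ cechC (KA k m n (q + 1)) t 1 μ ν) (hD : ∀ i, DK k f q (y {i}) = uR k i ^ t • z.1) :
    ∃ w, IsConnecting f m n q μ ν t z y w := by
  have hdy := cechD_mem_cechC (P := KA k m n (q + 1)) (mulCompat_KA (q + 1)) hy
  have hDy : (fun J => DK k f q (y J)) = cechD (B := k) (uR k) t (Pi.single ∅ z.1) := by
    refine cechC_ext_of_card_one (P := KP k m n q) (t := t) (μ := μ) (ν := ν)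
      (cechC_map (P := KA k m n (q + 1)) (DK k f q) (fun a b x hx => DK_mem_KP hf hx.1) hy)
      (cechD_mem_cechC (P := KP k m n q) (mulCompat_KP q) (i := 0)
        (single_mem_cechC (P := KP k m n q) Finset.card_empty
          (mem_piece_of_eq (P := KP k m n q) hz (by simp) (by simp)))) fun i => ?_
    rw [cechD_singleton, Pi.single_eq_same]
    exact hD i
  have hZ : ∀ J, cechD (B := k) (uR k) t y J ∈ ZK k f (q + 1) := by
    refine fun J => ⟨mem_AltT_of_mem_cechC hdy J, ?_⟩
    change DK k f q (cechD (B := k) (uR k) t y J) = 0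
    rw [← cechD_map, hDy, cechD_cechD, Pi.zero_apply]
  let w : Finset (Fin 4) → ZK k f (q + 1) := fun J => ⟨cechD (B := k) (uR k) t y J, hZ J⟩
  refine ⟨⟨w, fun J => ⟨fun hJ => ((hdy J).1 hJ).1, fun hJ => Subtype.ext ((hdy J).2 hJ)⟩, ?_⟩,
    hz, hy, hD, fun J => rfl⟩
  change cechD (B := k) (uR k) t w = 0
  funext J
  refine Subtype.ext ((cechD_map (ZK k f (q + 1)).subtype t w J).symm.trans ?_)
  exact congrFun (cechD_cechD t y) J

lemma exists_isConnecting_of_mem_TorPH (hf : ∀ i, f i ∈ Rpiece k m n) {x : HK k f q}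
    (hx : x ∈ TorPH k f m n q μ ν) :
    ∃ t z y w, IsConnecting f m n q μ ν t z y w ∧ HKmk k f q z = x := by
  obtain ⟨⟨z, hz, rfl⟩, t, ht⟩ := mem_TorPH.mp hx
  have hB : ∀ i, uR k i ^ t • z.1 ∈ BK k f q := by
    intro i
    have h := ht i
    rw [← map_smul, HKmk_eq_zero_iff] at h
    exact h
  have hP : ∀ i, uR k i ^ t • z.1 ∈ KP k m n q (t + μ) (t + ν) := fun i =>
    mulCompat_KP q (uR_pow_mem_Rpiece i t) hz
  choose y hy hD using fun i => exists_mem_KA_of_mem_BK hf (hP i) (hB i)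
  obtain ⟨w, hw⟩ := exists_isConnecting (y := ∑ i, Pi.single {i} (y i)) (t := t) hf hz
    (sum_mem fun i _ => single_mem_cechC (P := KA k m n (q + 1)) (Finset.card_singleton i)
      (mem_piece_of_eq (P := KA k m n (q + 1)) (hy i) (by push_cast; ring) (by push_cast; ring)))
    fun i => by
      rw [Finset.sum_apply, Finset.sum_eq_single i, Pi.single_eq_same, hD]
      · intro j _ hj
        exact Pi.single_eq_of_ne (by simpa using hj.symm) _
      · simp
  exact ⟨t, z, _, w, hw, rfl⟩

lemma IsConnecting.mem_cobd (hf : ∀ i, f i ∈ Rpiece k m n)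
    (h : IsConnecting f m n q μ ν t z y w) (hz : HKmk k f q z = 0) :
    w.1 ∈ cobd (uR k) (PZ k f m n (q + 1)) t 2 μ ν := by
  obtain ⟨x, hx, hDx⟩ := exists_mem_KA_of_mem_BK hf h.mem_PZ ((HKmk_eq_zero_iff z).mp hz)
  have hxC : cechD (B := k) (uR k) t (Pi.single ∅ x) ∈ cechC (KA k m n (q + 1)) t 1 μ ν :=
    cechD_mem_cechC (P := KA k m n (q + 1)) (mulCompat_KA (q + 1)) (i := 0)
      (single_mem_cechC (P := KA k m n (q + 1)) Finset.card_empty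
        (mem_piece_of_eq (P := KA k m n (q + 1)) hx (by simp) (by simp)))
  have hv := sub_mem h.mem_cechC hxC
  set v := y - cechD (B := k) (uR k) t (Pi.single ∅ x) with hvdef
  have hZ : ∀ J, v J ∈ ZK k f (q + 1) := by
    refine fun J => ⟨mem_AltT_of_mem_cechC hv J, ?_⟩
    change DK k f q (v J) = 0
    by_cases hJ : J.card = 1
    · obtain ⟨i, rfl⟩ := Finset.card_eq_one.mp hJ
      rw [hvdef, Pi.sub_apply, map_sub, h.DK_eq, cechD_singleton, Pi.single_eq_same, map_smul,
        hDx]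
      exact sub_self _
    · rw [(hv J).2 hJ, map_zero]
  let v' : Finset (Fin 4) → ZK k f (q + 1) := fun J => ⟨v J, hZ J⟩
  refine ⟨v', fun J => ⟨fun hJ => ((hv J).1 hJ).1, fun hJ => Subtype.ext ((hv J).2 hJ)⟩, ?_⟩
  funext J
  refine Subtype.ext ((cechD_map (ZK k f (q + 1)).subtype t v' J).symm.trans ?_)
  rw [h.coe_eq]
  change cechD (B := k) (uR k) t v J = _
  rw [hvdef, map_sub, cechD_cechD, sub_zero]

lemma IsConnecting.HKmk_eq_zero (h : IsConnecting f m n q μ ν t z y w)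
    (hw : w.1 ∈ cobd (uR k) (PZ k f m n (q + 1)) t 2 μ ν) : HKmk k f q z = 0 := by
  obtain ⟨v, hv, hvw⟩ := hw
  let v' : Finset (Fin 4) → (Fin (q + 1) → Fin 4) → RR k := fun J => (v J).1
  have hv' : cechD (B := k) (uR k) t v' = cechD (B := k) (uR k) t y := by
    funext J
    rw [← h.coe_eq, ← hvw]
    exact cechD_map (ZK k f (q + 1)).subtype t v J
  obtain ⟨x, hx⟩ := exists_eq_smul_of_cechD_eq_zero (t := t) (w := y - v')
    (by rw [map_sub, hv', sub_self])
  have hA : x ∈ AltT k (q + 1) := by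
    refine mem_AltT_of_smul_mem (uR_pow_ne_zero 0 t) ?_
    rw [← hx 0]
    exact sub_mem (mem_AltT_of_mem_cechC h.mem_cechC _) (ZK_le_AltT _ (v {0}).2)
  rw [HKmk_eq_zero_iff]
  refine ⟨x, hA, smul_right_injective _ (uR_pow_ne_zero (k := k) 0 t) ?_⟩
  change uR k 0 ^ t • DK k f q x = uR k 0 ^ t • z.1
  rw [← map_smul, ← hx 0, Pi.sub_apply, map_sub, h.DK_eq]
  exact (sub_eq_self).mpr (v {0}).2.2

lemma exists_isConnecting_of_LCvanish (hf : ∀ i, f i ∈ Rpiece k m n)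
    (h : LCvanish (B := k) (uR k) (KP k m n (q + 1)) 2 μ ν)
    (w : cocyc (uR k) (PZ k f m n (q + 1)) t 2 μ ν) :
    ∃ a z y w', w'.1 = cechTr (B := k) (uR k) a w.1 ∧
      IsConnecting f m n q μ ν (t + a) z y w' := by
  have hA : LCvanish (B := k) (uR k) (KA k m n (q + 1)) 2 μ ν := LCvanish_KA (i := 1) h
  obtain ⟨a, y, hy, hyw⟩ := hA t _ (cocyc_map (P := PZ k f m n (q + 1)) (Q := KA k m n (q + 1))
    (ZK k f (q + 1)).subtype (fun a b x hx => ⟨hx, x.2.1⟩) w.2)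
  have hcoe : ∀ J, cechD (B := k) (uR k) (t + a) y J = (cechTr (B := k) (uR k) a w.1 J).1 :=
    fun J => congrFun hyw J
  obtain ⟨z, hz⟩ := exists_eq_smul_of_cechD_eq_zero (t := t + a) (w := fun J => DK k f q (y J)) (by
    funext J
    rw [cechD_map, hcoe]
    exact (cechTr (B := k) (uR k) a w.1 J).2.2)
  have hzZ : z ∈ ZK k f q := by
    refine mem_ZK_of_smul_mem (uR_pow_ne_zero 0 (t + a)) ?_
    rw [← hz 0]
    exact DK_mem_ZK (mem_AltT_of_mem_cechC hy _)
  have hzP : z ∈ KP k m n q μ ν := by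
    refine mem_KP_of_smul_mem (uR_pow_ne_zero 0 (t + a)) (uR_pow_mem_Rpiece 0 (t + a)) ?_
    rw [← hz 0]
    exact mem_piece_of_eq (P := KP k m n q)
      (DK_mem_KP hf ((hy {0}).1 (Finset.card_singleton 0)).1) (by simp) (by simp)
  exact ⟨a, ⟨z, hzZ⟩, y, ⟨_, tr_cocyc (uR k) _
    (MulCompat.trComp (P := PZ k f m n (q + 1)) (mulCompat_PZ (q + 1))) w.2⟩, rfl, hzP, hy, hz,
    fun J => (hcoe J).symm⟩

end Connecting

section ConnectingIso

variable {k : Type} [Field k] {m n q : ℕ} {μ ν : ℤ} {f : Fin 4 → RR k} {t : ℕ} {z : ZK k f q}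
  {y : Finset (Fin 4) → (Fin (q + 1) → Fin 4) → RR k}
  {w : cocyc (uR k) (PZ k f m n (q + 1)) t 2 μ ν}

lemma IsConnecting.HKmk_mem_TorPH (h : IsConnecting f m n q μ ν t z y w) :
    HKmk k f q z ∈ TorPH k f m n q μ ν := by
  refine mem_TorPH.mpr ⟨⟨z, h.mem_PZ, rfl⟩, t, fun i => ?_⟩
  rw [← map_smul, HKmk_eq_zero_iff]
  exact ⟨y {i}, mem_AltT_of_mem_cechC h.mem_cechC _, h.DK_eq i⟩

variable (hc : TrComp (uR k) (PZ k f m n (q + 1)))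

lemma IsConnecting.exists_of_le (h : IsConnecting f m n q μ ν t z y w) {T : ℕ} (hT : t ≤ T) :
    ∃ y' w', IsConnecting f m n q μ ν T z y' w' ∧
      LCclass hc T 2 μ ν w' = LCclass hc t 2 μ ν w := by
  obtain ⟨a, rfl⟩ := Nat.exists_eq_add_of_le hT
  exact ⟨_, ⟨_, tr_cocyc (uR k) _ hc w.2⟩, h.cechTr a _ rfl, LCclass_cechTr hc w _ rfl⟩

variable (μ ν) in
/-- The graph of the connecting homomorphism `H⁰_𝔪(H_q)_{(μ,ν)} → H²_𝔪(Z_{q+1})_{(μ,ν)}`. -/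
def connectingGraph :
    Submodule k (TorPH k f m n q μ ν × LCH (uR k) (PZ k f m n (q + 1)) hc 2 μ ν) where
  carrier := {x | ∃ t z y w, IsConnecting f m n q μ ν t z y w ∧ HKmk k f q z = x.1.1 ∧
    LCclass hc t 2 μ ν w = x.2}
  zero_mem' := ⟨0, 0, 0, 0, isConnecting_zero, map_zero _, map_zero _⟩
  add_mem' := by
    rintro x x' ⟨t, z, y, w, h, hz, hw⟩ ⟨t', z', y', w', h', hz', hw'⟩
    obtain ⟨y₁, w₁, h₁, hw₁⟩ := h.exists_of_le hc (le_max_left t t')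
    obtain ⟨y₂, w₂, h₂, hw₂⟩ := h'.exists_of_le hc (le_max_right t t')
    refine ⟨_, _, _, _, h₁.add h₂, ?_, ?_⟩
    · rw [map_add, hz, hz']
      rfl
    · rw [map_add, hw₁, hw₂, hw, hw']
      rfl
  smul_mem' := by
    rintro c x ⟨t, z, y, w, h, hz, hw⟩
    refine ⟨_, _, _, _, h.smul c, ?_, ?_⟩
    · rw [HKmk_smul, hz]
      rfl
    · rw [map_smul, hw]
      rfl

lemma nonempty_linearEquiv_TorPH (hf : ∀ i, f i ∈ Rpiece k m n)
    (h : LCvanish (B := k) (uR k) (KP k m n (q + 1)) 2 μ ν) :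
    Nonempty (LCH (uR k) (PZ k f m n (q + 1)) hc 2 μ ν ≃ₗ[k] TorPH k f m n q μ ν) := by
  refine nonempty_linearEquiv_of_graph (connectingGraph μ ν hc) (fun x => ?_) (fun c => ?_)
    (fun x hx => ?_) (fun c hx => ?_)
  · obtain ⟨t, z, y, w, hw, hz⟩ := exists_isConnecting_of_mem_TorPH hf x.2
    exact ⟨LCclass hc t 2 μ ν w, t, z, y, w, hw, hz, rfl⟩
  · obtain ⟨t, w, rfl⟩ := exists_LCclass_eq hc c
    obtain ⟨a, z, y, w', hw', hcon⟩ := exists_isConnecting_of_LCvanish hf h w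
    exact ⟨⟨HKmk k f q z, hcon.HKmk_mem_TorPH⟩, t + a, z, y, w', hcon, rfl,
      LCclass_cechTr hc w w' hw'⟩
  · obtain ⟨t, z, y, w, hcon, hz, hw⟩ := hx
    obtain ⟨a, ha⟩ := (LCclass_eq_zero_iff hc w).mp hw
    have hcon' := hcon.cechTr a ⟨_, tr_cocyc (uR k) _ hc w.2⟩ rfl
    exact Subtype.ext (hz.symm.trans (hcon'.HKmk_eq_zero ha))
  · obtain ⟨t, z, y, w, hcon, hz, hw⟩ := hx
    refine hw.symm.trans ((LCclass_eq_zero_iff hc w).mpr ⟨0, ?_⟩)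
    rw [cechTr_zero]
    exact hcon.mem_cobd hf hz

end ConnectingIso

theorem statement2
    (m n : ℕ) (hm : 1 ≤ m) (hn : 1 ≤ n)
    -- the `fᵢ` are bihomogeneous of bidegree `(m,n)`
    (hf : ∀ i, f i ∈ Rpiece k m n)
    -- the `fᵢ` minimally generate the ideal `I = (f₀,…,f₃)`
    (hmin : LinearIndependent k f)
    -- the closure of the image of `φ` is a surface `𝒮 = V(F) ⊆ ℙ³`
    (F : SS k) (hF : F ≠ 0)
    (hFeq : RingHom.ker (aeval (R := k) f).toRingHom = Ideal.span {F})
    -- the base scheme `ℬ = V(I)` is finite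
    (hBfin : (BasePts k f).Finite)
    -- every base point of `φ` is locally defined by at most three generators
    (hloc : ∀ a b, IsBasePoint k f a b → LocGen k (Ideal.span (Set.range f)) a b 3)
    -- `r = Σ_p d_p` is the degree of the base scheme, i.e. the eventual value of the
    -- Hilbert function of `R/I`
    (r : ℕ)
    (hr : ∃ A₀ B₀ : ℤ, ∀ μ ν : ℤ, A₀ ≤ μ → B₀ ≤ ν →
      HFq k (Ideal.span (Set.range f)) μ ν = r)

    -- the natural compatibility of the bigrading of the cycles `Z_p` with
    -- multiplication by products of the generators of `𝔪` (a true, purely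
    -- degree-theoretic side condition)
    (hc : ∀ p : ℕ, TrComp (uR k) (fun a b => PZ k f m n p a b)) :
    ∀ p : ℕ, (p = 1 ∨ p = 2) →
      -- (a) `H²_𝔪(Z_p)_{(μ,ν)} ≅ H⁰_𝔪(H_{p−1})_{(μ,ν)}` whenever
      -- `H²_𝔪(K_p)_{(μ,ν)} = 0`:
      (∀ μ ν : ℤ, LCvanish (B := k) (uR k) (KP k m n p) 2 μ ν →
        Nonempty ((LCH (uR k) (fun a b => PZ k f m n p a b) (hc p) 2 μ ν) ≃ₗ[k]
          ↥(TorPH k f m n (p - 1) μ ν))) ∧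
      -- (b) `H³_𝔪(Z_p)_{(μ,ν)} = 0` whenever `H²_𝔪(K_{p−1})_{(μ,ν)} =
      -- H²_𝔪(K_p)_{(μ,ν)} = H³_𝔪(K_{p+1})_{(μ,ν)} = 0`:
      (∀ μ ν : ℤ,
        LCvanish (B := k) (uR k) (KP k m n (p - 1)) 2 μ ν →
        LCvanish (B := k) (uR k) (KP k m n p) 2 μ ν →
        LCvanish (B := k) (uR k) (KP k m n (p + 1)) 3 μ ν →
        LCvanish (B := k) (uR k) (fun a b => PZ k f m n p a b) 3 μ ν) := by
  intro p hp
  refine ⟨fun μ ν h => ?_, fun μ ν _ _ h => LCvanish_PZ_three hf (hmin.ne_zero 0) hp h⟩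
  rcases hp with rfl | rfl
  · exact nonempty_linearEquiv_TorPH (q := 0) (hc 1) hf h
  · exact nonempty_linearEquiv_TorPH (q := 1) (hc 2) hf h
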